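/- arXiv:math/0401205 — 2 statements merged into one kernel-verified Lean document; each statement's English description precedes it below -/
import Mathlib

section
/- Let c₊(z) = Σ_{k≥0} γ_k z^k with Σ_{k≥0}|γ_k| < ∞ and c₊(z) ≠ 0 for all |z| ≤ 1, and define ψ on T by ψ(e^{iθ}) = c₊(e^{−iθ}) c₊(e^{iθ})^{−1} χ(e^{iθ}). If A is a bounded linear operator on ℓ²(ℕ) with ⟨e_j, A e_k⟩ = δ_{jk} + ψ_{j+k+1} for all j,k ≥ 0 (i.e. A = I + H(ψ)), then A is invertible on ℓ²(ℕ). -/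
open Filter MeasureTheory
open scoped InnerProductSpace

noncomputable section

/-- ℓ²(ℕ) over ℂ. -/
abbrev l2 : Type := lp (fun _ : ℕ => ℂ) 2

/-- The `k`-th Fourier coefficient of a function on the unit circle, given as a
`2π`-periodic function of the angle: `a_k = (1/(2π)) ∫_0^{2π} f(θ) e^{-ikθ} dθ`. -/
def fc (f : ℝ → ℂ) (k : ℤ) : ℂ :=
  ((1 / (2 * Real.pi) : ℝ) : ℂ) *
    ∫ θ in (0:ℝ)..(2 * Real.pi), f θ * Complex.exp (-(Complex.I * k * θ))

/-- The standard orthonormal basis vector `e_j` of ℓ²(ℕ). -/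
def ee (j : ℕ) : l2 := lp.single 2 j 1

/-- Matrix entry `⟨e_j, A e_k⟩` of an operator on ℓ²(ℕ). -/
def ent (A : l2 →L[ℂ] l2) (j k : ℕ) : ℂ := ⟪ee j, A (ee k)⟫_ℂ

/-- The function `χ` on the circle: `χ(e^{iθ}) = i` for `0 < θ < π` and
`χ(e^{iθ}) = −i` for `−π < θ < 0`. -/
def chi (θ : ℝ) : ℂ := if 0 < Real.sin θ then Complex.I else -Complex.I

/-- If `E` is an idempotent whose compression to the range of `ι` is invertible, then so is the
compression of the similar idempotent `M⁻¹ E M`, provided `M` is upper triangular, `W` is lower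
triangular and `M W` commutes with `E`. -/
theorem exists_inverse_compression {H L : Type*}
    [NormedAddCommGroup H] [NormedSpace ℂ H] [NormedAddCommGroup L] [NormedSpace ℂ L]
    (ι : H →L[ℂ] L) (p : L →L[ℂ] H) (E M M' W W' : L →L[ℂ] L) (S : H →L[ℂ] H)
    (hpι : ∀ x, p (ι x) = x) (hE : ∀ x, E (E x) = E x)
    (hMM' : ∀ x, M (M' x) = x) (hM'M : ∀ x, M' (M x) = x)
    (hWW' : ∀ x, W (W' x) = x) (hW'W : ∀ x, W' (W x) = x)
    (hMWE : ∀ x, M (W (E x)) = E (M (W x)))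
    (hM : ∀ x, ι (p (M (ι x))) = M (ι x)) (hM' : ∀ x, ι (p (M' (ι x))) = M' (ι x))
    (hW : ∀ x, p (W (ι (p x))) = p (W x)) (hW' : ∀ x, p (W' (ι (p x))) = p (W' x))
    (hS : ∀ x, p (E (ι (S x))) = x) (hS' : ∀ x, S (p (E (ι x))) = x)
    (hES : ∀ x, E (ι (S (p (E x)))) = E x)
    (A : H →L[ℂ] H) (hA : ∀ x, A x = (2 : ℂ) • p (M' (E (M (ι x))))) :
    ∃ A' : H →L[ℂ] H, A ∘L A' = 1 ∧ A' ∘L A = 1 := by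
  have hEMW : ∀ x, E x = W' (M' (E (M (W x)))) := fun x => by rw [← hMWE, hM'M, hW'W]
  refine ⟨(2⁻¹ : ℂ) • (p ∘L M' ∘L ι ∘L S ∘L p ∘L E ∘L M ∘L W ∘L E ∘L ι ∘L S ∘L p ∘L W' ∘L ι),
    ?_, ?_⟩
  · ext1 x
    simp only [ContinuousLinearMap.comp_apply, smul_apply, map_smul, hA,
      one_apply_eq_self]
    rw [smul_smul, mul_inv_cancel₀ (two_ne_zero (α := ℂ)), one_smul, hM', hMM', hES, ← hMWE, hE,
      hM'M, ← hW, hS, hW, hWW', hpι]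
  · ext1 x
    simp only [ContinuousLinearMap.comp_apply, smul_apply, map_smul, hA,
      one_apply_eq_self]
    have h1 : W' (M' (E (M (ι x)))) = E (W' (ι x)) := by
      conv_rhs => rw [hEMW, hWW']
    rw [smul_smul, mul_inv_cancel₀ (two_ne_zero (α := ℂ)), one_smul, hW', h1, hES, hMWE, hWW', hE,
      ← hM, hS', hM, hM'M, hpι]

/-- The circle `ℝ / 2πℤ`. -/
abbrev Circ : Type := AddCircle (2 * Real.pi)

instance fact_two_pi_pos : Fact (0 < 2 * Real.pi) := ⟨Real.two_pi_pos⟩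

/-- The normalised Haar measure on the circle. -/
abbrev μC : Measure Circ := AddCircle.haarAddCircle

/-- `L²` of the circle. -/
abbrev L2C : Type := Lp ℂ 2 μC

/-- Multiplication by a function `f`, as an operator on `L²` of the circle; junk value `0` if `f`
is not essentially bounded. -/
def mulOp (f : Circ → ℂ) : L2C →L[ℂ] L2C :=
  open Classical in
  if hf : MemLp f ⊤ μC then (ContinuousLinearMap.mul ℂ ℂ).holderL μC ⊤ 2 2 (hf.toLp f) else 0

theorem coeFn_mulOp {f : Circ → ℂ} (hf : MemLp f ⊤ μC) (g : L2C) :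
    mulOp f g =ᵐ[μC] fun x => f x * g x := by
  have h : mulOp f g = (ContinuousLinearMap.mul ℂ ℂ).holder 2 (hf.toLp f) g := by
    simp [mulOp, dif_pos hf, ContinuousLinearMap.holderL, ContinuousLinearMap.holderₗ]
  rw [h]
  filter_upwards [(ContinuousLinearMap.mul ℂ ℂ).coeFn_holder (r := 2) (hf.toLp f) g,
    hf.coeFn_toLp] with x h1 h2
  rw [h1, h2]; rfl

theorem measurePreserving_neg_circ : MeasurePreserving (fun x : Circ => -x) μC μC :=
  Measure.measurePreserving_neg μC

/-- The flip `f(t) ↦ f(1/t)` on `L²` of the circle. -/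
def flipOp : L2C →L[ℂ] L2C :=
  (Lp.compMeasurePreservingₗᵢ ℂ (fun x : Circ => -x)
    measurePreserving_neg_circ).toContinuousLinearMap

theorem coeFn_flipOp (g : L2C) : flipOp g =ᵐ[μC] fun x => g (-x) :=
  Lp.coeFn_compMeasurePreserving g measurePreserving_neg_circ

theorem ae_neg_circ {p : Circ → Prop} (h : ∀ᵐ x ∂μC, p x) : ∀ᵐ x ∂μC, p (-x) :=
  measurePreserving_neg_circ.quasiMeasurePreserving.ae h

theorem memLp_top_fourier (n : ℤ) : MemLp (fun x : Circ => fourier n x) ⊤ μC :=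
  MemLp.of_bound (fourier n).continuous.aestronglyMeasurable 1
    (Eventually.of_forall fun x => by simp [Circle.norm_coe])

theorem mulOp_comm {f g : Circ → ℂ} (hf : MemLp f ⊤ μC) (hg : MemLp g ⊤ μC) (u : L2C) :
    mulOp f (mulOp g u) = mulOp g (mulOp f u) := by
  refine Lp.ext ?_
  filter_upwards [coeFn_mulOp hf (mulOp g u), coeFn_mulOp hg u, coeFn_mulOp hf u,
    coeFn_mulOp hg (mulOp f u)] with x h1 h2 h3 h4
  rw [h1, h2, h4, h3, mul_left_comm]

theorem mulOp_mulOp_inv {f g : Circ → ℂ} (hf : MemLp f ⊤ μC) (hg : MemLp g ⊤ μC)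
    (hfg : ∀ x, f x * g x = 1) (u : L2C) : mulOp f (mulOp g u) = u := by
  refine Lp.ext ?_
  filter_upwards [coeFn_mulOp hf (mulOp g u), coeFn_mulOp hg u] with x h1 h2
  rw [h1, h2, ← mul_assoc, hfg, one_mul]

theorem memLp_top_neg {f : Circ → ℂ} (hf : MemLp f ⊤ μC) : MemLp (fun x => f (-x)) ⊤ μC :=
  hf.comp_measurePreserving measurePreserving_neg_circ

theorem flipOp_mulOp {f : Circ → ℂ} (hf : MemLp f ⊤ μC) (u : L2C) :
    flipOp (mulOp f u) = mulOp (fun x => f (-x)) (flipOp u) := by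
  refine Lp.ext ?_
  filter_upwards [coeFn_flipOp (mulOp f u), ae_neg_circ (coeFn_mulOp hf u), coeFn_flipOp u,
    coeFn_mulOp (memLp_top_neg hf) (flipOp u)] with x h1 h2 h3 h4
  rw [h1, h2, h4, h3]

theorem flipOp_flipOp (u : L2C) : flipOp (flipOp u) = u := by
  refine Lp.ext ?_
  filter_upwards [coeFn_flipOp (flipOp u), ae_neg_circ (coeFn_flipOp u)] with x h1 h2
  rw [h1, h2, neg_neg]

theorem flipOp_fourierLp (n : ℤ) :
    flipOp (fourierLp 2 n : L2C) = fourierLp 2 (-n) := by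
  refine Lp.ext ?_
  filter_upwards [coeFn_flipOp (fourierLp 2 n : L2C),
    ae_neg_circ (coeFn_fourierLp (T := 2 * Real.pi) 2 n),
    coeFn_fourierLp (T := 2 * Real.pi) 2 (-n)] with x h1 h2 h3
  rw [h1, h2, h3]
  simp

theorem mulOp_fourierLp (m n : ℤ) :
    mulOp (fun x => fourier m x) (fourierLp 2 n : L2C) = fourierLp 2 (m + n) := by
  refine Lp.ext ?_
  filter_upwards [coeFn_mulOp (memLp_top_fourier m) (fourierLp 2 n : L2C),
    coeFn_fourierLp (T := 2 * Real.pi) 2 n,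
    coeFn_fourierLp (T := 2 * Real.pi) 2 (m + n)] with x h1 h2 h3
  rw [h1, h2, h3, fourier_add]

theorem inner_flipOp (u v : L2C) : ⟪u, flipOp v⟫_ℂ = ⟪flipOp u, v⟫_ℂ := by
  have h := (Lp.compMeasurePreservingₗᵢ ℂ (fun x : Circ => -x)
    measurePreserving_neg_circ (E := ℂ) (p := 2)).inner_map_map (flipOp u) v
  rw [← h]
  change _ = ⟪flipOp (flipOp u), flipOp v⟫_ℂ
  rw [flipOp_flipOp]

theorem inner_mulOp {f : Circ → ℂ} (hf : MemLp f ⊤ μC) (u v : L2C) :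
    ⟪u, mulOp f v⟫_ℂ = ∫ x, f x * (v x * starRingEnd ℂ (u x)) ∂μC := by
  rw [L2.inner_def]
  refine integral_congr_ae ?_
  filter_upwards [coeFn_mulOp hf v] with x h1
  rw [h1, RCLike.inner_apply, mul_assoc]

theorem inner_mulOp_left {f : Circ → ℂ} (hf : MemLp f ⊤ μC) (u v : L2C) :
    ⟪mulOp f u, v⟫_ℂ = ⟪u, mulOp (fun x => starRingEnd ℂ (f x)) v⟫_ℂ := by
  have hf' : MemLp (fun x => starRingEnd ℂ (f x)) ⊤ μC := hf.star
  rw [inner_mulOp hf', L2.inner_def]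
  refine integral_congr_ae ?_
  filter_upwards [coeFn_mulOp hf u] with x h1
  rw [h1, RCLike.inner_apply, map_mul]
  ring

theorem inner_fourierLp_mulOp {f : Circ → ℂ} (hf : MemLp f ⊤ μC) (j k : ℤ) :
    ⟪(fourierLp 2 j : L2C), mulOp f (fourierLp 2 k)⟫_ℂ = fourierCoeff f (j - k) := by
  rw [inner_mulOp hf, fourierCoeff]
  refine integral_congr_ae ?_
  filter_upwards [coeFn_fourierLp (T := 2 * Real.pi) 2 j,
    coeFn_fourierLp (T := 2 * Real.pi) 2 k] with x h1 h2
  rw [h1, h2, ← fourier_neg, ← fourier_add, smul_eq_mul, mul_comm]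
  congr 3
  ring

theorem fourierCoeff_comp_neg (f : Circ → ℂ) (n : ℤ) :
    fourierCoeff (fun x => f (-x)) n = fourierCoeff f (-n) := by
  unfold fourierCoeff
  rw [← integral_neg_eq_self]
  simp

/-- Uniqueness of Fourier coefficients for integrable functions on the circle. -/
theorem ae_eq_zero_of_integral_fourier_mul {h : Circ → ℂ} (hh : Integrable h μC)
    (h0 : ∀ n : ℤ, ∫ x, fourier n x * h x ∂μC = 0) : h =ᵐ[μC] 0 := by
  have hint : ∀ f : C(Circ, ℂ), Integrable (fun x => f x * h x) μC := fun f =>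
    hh.bdd_mul (c := ‖f‖) f.continuous.aestronglyMeasurable
      (Eventually.of_forall f.norm_coe_le_norm)
  let Λ : C(Circ, ℂ) →ₗ[ℂ] ℂ :=
    { toFun := fun f => ∫ x, f x * h x ∂μC
      map_add' := fun f g => by
        rw [← integral_add (hint f) (hint g)]
        simp [add_mul]
      map_smul' := fun c f => by
        simp [mul_assoc, integral_const_mul] }
  have hbd : ∀ f : C(Circ, ℂ), ‖Λ f‖ ≤ (∫ x, ‖h x‖ ∂μC) * ‖f‖ := fun f => by
    rw [← integral_mul_const]
    refine norm_integral_le_of_norm_le (hh.norm.mul_const _) (Eventually.of_forall fun x => ?_)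
    rw [norm_mul, mul_comm]
    gcongr
    exact f.norm_coe_le_norm x
  have hΛ : Λ.mkContinuous _ hbd = 0 := by
    refine ContinuousLinearMap.ext_on (s := Set.range (@fourier (2 * Real.pi))) ?_ ?_
    · exact Submodule.dense_iff_topologicalClosure_eq_top.2
        (span_fourier_closure_eq_top (T := 2 * Real.pi))
    · rintro _ ⟨n, rfl⟩
      exact h0 n
  have hcont : ∀ f : C(Circ, ℂ), ∫ x, f x * h x ∂μC = 0 := fun f =>
    congrArg (fun T : C(Circ, ℂ) →L[ℂ] ℂ => T f) hΛ
  refine ae_eq_zero_of_forall_setIntegral_isClosed_eq_zero hh fun s hs => ?_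
  rw [← integral_indicator hs.measurableSet]
  let φ : ℕ → C(Circ, ℂ) := fun n =>
    ⟨fun x => ((hs.apprSeq n x : ℝ) : ℂ), by
      have := (hs.apprSeq n).continuous
      fun_prop⟩
  have hlim : Tendsto (fun n => ∫ x, φ n x * h x ∂μC) atTop
      (nhds (∫ x, s.indicator h x ∂μC)) := by
    refine tendsto_integral_of_dominated_convergence (fun x => ‖h x‖)
      (fun n => (hint (φ n)).aestronglyMeasurable) hh.norm
      (fun n => Eventually.of_forall fun x => ?_) (Eventually.of_forall fun x => ?_)
    · rw [norm_mul]
      refine mul_le_of_le_one_left (norm_nonneg _) ?_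
      have := HasOuterApproxClosed.apprSeq_apply_le_one hs n x
      simpa [φ] using this
    · have h1 := (tendsto_pi_nhds.1 (HasOuterApproxClosed.tendsto_apprSeq hs)) x
      have h2 : Tendsto (fun n => φ n x) atTop
          (nhds (((s.indicator (fun _ => (1 : NNReal)) x : NNReal) : ℝ) : ℂ)) := by
        have hc : Continuous fun y : NNReal => ((y : ℝ) : ℂ) := by fun_prop
        exact (hc.tendsto _).comp h1
      have h3 := h2.mul_const (h x)
      by_cases hx : x ∈ s <;> simpa [hx] using h3
  simp_rw [hcont] at hlim
  exact (tendsto_nhds_unique hlim tendsto_const_nhds)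

/-- `1/(2π)` times an integral over a period, as a Fourier coefficient on the circle. -/
theorem fc_eq_fourierCoeff (f : Circ → ℂ) (k : ℤ) :
    fc (fun θ => f (θ : Circ)) k = fourierCoeff f k := by
  rw [fourierCoeff_eq_intervalIntegral f k 0, fc, zero_add, Complex.real_smul]
  congr 1
  refine intervalIntegral.integral_congr fun θ _ => ?_
  simp only [smul_eq_mul]
  rw [mul_comm, fourier_coe_apply]
  congr 2
  push_cast
  have : (Real.pi : ℂ) ≠ 0 := by exact_mod_cast Real.pi_ne_zero
  field_simp

theorem toCircle_coe (θ : ℝ) :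
    ((AddCircle.toCircle (θ : Circ) : Circle) : ℂ) = Complex.exp (Complex.I * θ) := by
  have h := fourier_coe_apply (T := 2 * Real.pi) (n := 1) (x := θ)
  rw [fourier_one] at h
  rw [h]
  congr 1
  push_cast
  have : (Real.pi : ℂ) ≠ 0 := by exact_mod_cast Real.pi_ne_zero
  field_simp

/-- Boundary values of a function continuous on the closed disk and holomorphic inside have no
negative Fourier coefficients. -/
theorem fourierCoeff_eq_zero_of_diffContOnCl {G : ℂ → ℂ}
    (hG : DiffContOnCl ℂ G (Metric.ball 0 1)) {n : ℤ} (hn : n < 0) :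
    fourierCoeff (fun x : Circ => G (AddCircle.toCircle x)) n = 0 := by
  obtain ⟨m, rfl⟩ : ∃ m : ℕ, n = -(m + 1) := ⟨(-n - 1).toNat, by omega⟩
  have hz : DiffContOnCl ℂ (fun z => z ^ m * G z) (Metric.ball 0 1) :=
    ((Differentiable.pow differentiable_id m).diffContOnCl).smul hG
  have h := hz.circleIntegral_eq_zero zero_le_one
  rw [circleIntegral] at h
  rw [← fc_eq_fourierCoeff, fc]
  refine mul_eq_zero_of_right _ ?_
  have h2 : ∀ θ : ℝ, G (AddCircle.toCircle (θ : Circ)) *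
        Complex.exp (-(Complex.I * ((-(m + 1) : ℤ) : ℂ) * θ)) =
      (-Complex.I) * (deriv (circleMap 0 1) θ • (circleMap 0 1 θ ^ m * G (circleMap 0 1 θ))) := by
    intro θ
    have h3 : circleMap 0 1 θ = Complex.exp (Complex.I * θ) := by simp [circleMap, mul_comm]
    have h4 : Complex.exp (-(Complex.I * ((-(m + 1) : ℤ) : ℂ) * θ)) =
        Complex.exp (Complex.I * θ) ^ (m + 1) := by
      rw [← Complex.exp_nat_mul]
      congr 1
      push_cast
      ring
    rw [deriv_circleMap, toCircle_coe, h3, h4, smul_eq_mul]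
    linear_combination (Complex.exp (Complex.I * θ) ^ (m + 1) *
      G (Complex.exp (Complex.I * θ))) * Complex.I_sq
  simp_rw [h2]
  rw [intervalIntegral.integral_const_mul, h, mul_zero]

/-- An absolutely summable power series is holomorphic in the disk and continuous up to the
boundary. -/
theorem diffContOnCl_powerSeries {γ : ℕ → ℂ} (hγ : Summable fun k => ‖γ k‖) :
    DiffContOnCl ℂ (fun z => ∑' k : ℕ, γ k * z ^ k) (Metric.ball 0 1) := by
  have hb : ∀ (k : ℕ) (z : ℂ), z ∈ Metric.closedBall (0 : ℂ) 1 → ‖γ k * z ^ k‖ ≤ ‖γ k‖ := by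
    intro k z hz
    rw [norm_mul, norm_pow]
    exact mul_le_of_le_one_right (norm_nonneg _)
      (pow_le_one₀ (norm_nonneg _) (by simpa using hz))
  refine ⟨?_, ?_⟩
  · exact Complex.differentiableOn_tsum_of_summable_norm hγ (fun k => by fun_prop)
      Metric.isOpen_ball fun k z hz => hb k z (Metric.ball_subset_closedBall hz)
  · rw [closure_ball _ one_ne_zero]
    exact continuousOn_tsum (fun k => by fun_prop) hγ hb

theorem inner_ee (j : ℕ) (x : l2) : ⟪ee j, x⟫_ℂ = x j := by
  rw [ee, lp.inner_single_left]
  simp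

theorem orthonormal_fourierLp_nat :
    Orthonormal ℂ (fun n : ℕ => (fourierLp 2 (n : ℤ) : L2C)) :=
  orthonormal_fourier.comp _ Nat.cast_injective

/-- The embedding of `ℓ²(ℕ)` onto the Hardy space `H²` of the circle. -/
def hardyEmb : l2 →L[ℂ] L2C :=
  orthonormal_fourierLp_nat.orthogonalFamily.linearIsometry.toContinuousLinearMap

/-- The Riesz projection, with values in `ℓ²(ℕ)`. -/
def hardyProj : L2C →L[ℂ] l2 := ContinuousLinearMap.adjoint hardyEmb

theorem hardyEmb_ee (n : ℕ) : hardyEmb (ee n) = fourierLp 2 (n : ℤ) := by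
  change orthonormal_fourierLp_nat.orthogonalFamily.linearIsometry (lp.single 2 n 1) = _
  rw [OrthogonalFamily.linearIsometry_apply_single]
  simp

theorem hardyProj_apply (u : L2C) (n : ℕ) :
    hardyProj u n = ⟪(fourierLp 2 (n : ℤ) : L2C), u⟫_ℂ := by
  rw [← inner_ee, hardyProj, ContinuousLinearMap.adjoint_inner_right, hardyEmb_ee]

theorem hardyProj_hardyEmb (x : l2) : hardyProj (hardyEmb x) = x := by
  refine ext_inner_left ℂ fun y => ?_
  rw [hardyProj, ContinuousLinearMap.adjoint_inner_right]
  exact orthonormal_fourierLp_nat.orthogonalFamily.linearIsometry.inner_map_map y x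

theorem ext_inner_fourierLp {u v : L2C}
    (h : ∀ n : ℤ, ⟪(fourierLp 2 n : L2C), u⟫_ℂ = ⟪(fourierLp 2 n : L2C), v⟫_ℂ) : u = v := by
  refine fourierBasis.repr.injective (lp.ext (funext fun n => ?_))
  rw [fourierBasis.repr_apply_apply, fourierBasis.repr_apply_apply, coe_fourierBasis, h]

theorem inner_fourierLp_hardyEmb_of_neg {n : ℤ} (hn : n < 0) (x : l2) :
    ⟪(fourierLp 2 n : L2C), hardyEmb x⟫_ℂ = 0 := by
  have h : hardyProj (fourierLp 2 n : L2C) = 0 := by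
    refine lp.ext (funext fun k => ?_)
    rw [hardyProj_apply, orthonormal_fourier.2 (by omega)]
    rfl
  rw [← ContinuousLinearMap.adjoint_inner_left]
  change ⟪hardyProj _, x⟫_ℂ = 0
  rw [h, inner_zero_left]

theorem hardyEmb_hardyProj {u : L2C}
    (hu : ∀ n : ℤ, n < 0 → ⟪(fourierLp 2 n : L2C), u⟫_ℂ = 0) : hardyEmb (hardyProj u) = u := by
  refine ext_inner_fourierLp fun n => ?_
  rcases lt_or_ge n 0 with hn | hn
  · rw [hu n hn, inner_fourierLp_hardyEmb_of_neg hn]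
  · lift n to ℕ using hn
    rw [← hardyProj_apply, hardyProj_hardyEmb, hardyProj_apply]

theorem hasSum_ee (x : l2) : HasSum (fun k => x k • ee k) x := by
  have h := lp.hasSum_single (E := fun _ : ℕ => ℂ) (p := 2) (by simp) x
  convert h using 2 with k
  rw [ee, ← lp.single_smul]
  simp

theorem clm_ext_ee {F : Type*} [NormedAddCommGroup F] [NormedSpace ℂ F] {S T : l2 →L[ℂ] F}
    (h : ∀ k, S (ee k) = T (ee k)) : S = T := by
  ext1 x
  have h1 := (hasSum_ee x).mapL S
  have h2 := (hasSum_ee x).mapL T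
  simp only [map_smul, h] at h1 h2
  exact h1.unique h2

/-- An operator without matrix entries from nonnegative to negative indices preserves `H²`. -/
theorem preserves_hardy {T : L2C →L[ℂ] L2C}
    (hT : ∀ n : ℤ, n < 0 → ∀ k : ℕ, ⟪(fourierLp 2 n : L2C), T (fourierLp 2 (k : ℤ))⟫_ℂ = 0)
    (x : l2) : hardyEmb (hardyProj (T (hardyEmb x))) = T (hardyEmb x) := by
  refine hardyEmb_hardyProj fun n hn => ?_
  have h : (innerSL ℂ (fourierLp 2 n : L2C)) ∘L T ∘L hardyEmb = 0 :=
    clm_ext_ee fun k => by simpa [hardyEmb_ee] using hT n hn k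
  simpa using congrArg (fun S : l2 →L[ℂ] ℂ => S x) h

theorem preserves_hardy_compl {T : L2C →L[ℂ] L2C}
    (hT : ∀ n : ℤ, n < 0 → ∀ k : ℕ, ⟪(fourierLp 2 (k : ℤ) : L2C), T (fourierLp 2 n)⟫_ℂ = 0)
    (u : L2C) : hardyProj (T (hardyEmb (hardyProj u))) = hardyProj (T u) := by
  refine ext_inner_left ℂ fun y => ?_
  have h := preserves_hardy (T := ContinuousLinearMap.adjoint T) (fun n hn k => by
    rw [ContinuousLinearMap.adjoint_inner_right, ← inner_conj_symm, hT n hn k, map_zero]) y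
  have hp : ∀ (y : l2) (u : L2C), ⟪y, hardyProj u⟫_ℂ = ⟪hardyEmb y, u⟫_ℂ := fun y u =>
    ContinuousLinearMap.adjoint_inner_right _ _ _
  have hp' : ∀ (y : l2) (u : L2C), ⟪hardyProj u, y⟫_ℂ = ⟪u, hardyEmb y⟫_ℂ := fun y u =>
    ContinuousLinearMap.adjoint_inner_left _ _ _
  rw [hp, hp, ← ContinuousLinearMap.adjoint_inner_left, ← hp', hp, h,
    ContinuousLinearMap.adjoint_inner_left]

/-- The function `χ` on the circle. -/
def chiC (x : Circ) : ℂ :=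
  if 0 < ((AddCircle.toCircle x : Circle) : ℂ).im then Complex.I else -Complex.I

theorem chiC_coe (θ : ℝ) : chiC (θ : Circ) = chi θ := by
  rw [chiC, chi, toCircle_coe, mul_comm, Complex.exp_ofReal_mul_I_im]

theorem norm_chiC (x : Circ) : ‖chiC x‖ = 1 := by
  unfold chiC
  split_ifs <;> simp

theorem chiC_mul_self (x : Circ) : chiC x * chiC x = -1 := by
  unfold chiC
  split_ifs <;> simp

theorem conj_chiC (x : Circ) : starRingEnd ℂ (chiC x) = -chiC x := by
  unfold chiC
  split_ifs <;> simp

theorem measurable_chiC : Measurable chiC := by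
  refine Measurable.ite ?_ measurable_const measurable_const
  exact measurableSet_lt measurable_const
    (Complex.continuous_im.comp (continuous_subtype_val.comp
      AddCircle.continuous_toCircle)).measurable

theorem memLp_top_chiC : MemLp chiC ⊤ μC :=
  MemLp.of_bound measurable_chiC.aestronglyMeasurable 1
    (Eventually.of_forall fun x => (norm_chiC x).le)

theorem ae_im_toCircle_ne_zero :
    ∀ᵐ x ∂μC, ((AddCircle.toCircle x : Circle) : ℂ).im ≠ 0 := by
  have hsub : {x : Circ | ((AddCircle.toCircle x : Circle) : ℂ).im = 0} ⊆
      {((0 : ℝ) : Circ), ((Real.pi : ℝ) : Circ)} := by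
    intro x hx
    induction x using QuotientAddGroup.induction_on with
    | H θ =>
      have hx' : ((AddCircle.toCircle (θ : Circ) : Circle) : ℂ).im = 0 := hx
      rw [toCircle_coe, mul_comm, Complex.exp_ofReal_mul_I_im] at hx'
      exact Real.Angle.sin_eq_zero_iff (θ := (θ : Real.Angle)).1 hx'
  have : Nontrivial Circ := ⟨⟨((Real.pi : ℝ) : Circ), 0, Real.Angle.pi_ne_zero⟩⟩
  have : (nhdsWithin (0 : Circ) {0}ᶜ).NeBot :=
    ConnectedSpace.neBot_nhdsWithin_compl_of_nontrivial_of_t1space 0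
  have hnull : μC {x : Circ | ((AddCircle.toCircle x : Circle) : ℂ).im = 0} = 0 :=
    measure_mono_null hsub (Set.Finite.measure_zero (by simp) _)
  simpa [ae_iff] using hnull

theorem chiC_mul_chiC_neg : ∀ᵐ x ∂μC, chiC x * chiC (-x) = 1 := by
  filter_upwards [ae_im_toCircle_ne_zero] with x hx
  have h : ((AddCircle.toCircle (-x) : Circle) : ℂ).im =
      -((AddCircle.toCircle x : Circle) : ℂ).im := by
    rw [AddCircle.toCircle_neg, Circle.coe_inv_eq_conj, Complex.conj_im]
  unfold chiC
  rw [h]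
  rcases lt_or_gt_of_ne hx with h1 | h1
  · rw [if_neg (by linarith), if_pos (by linarith)]
    simp
  · rw [if_pos (by linarith), if_neg (by linarith)]
    simp

theorem fourierCoeff_mul_fourier_neg_one (f : Circ → ℂ) (n : ℤ) :
    fourierCoeff (fun x => f x * fourier (-1) x) n = fourierCoeff f (n + 1) := by
  unfold fourierCoeff
  congr 1
  ext x
  rw [neg_add, fourier_add]
  simp only [smul_eq_mul]
  ring

/-- The Fourier coefficients of `χ` are, up to `π`, the moments of Lebesgue measure on
`[-1, 1]`. -/
theorem fourierCoeff_chiC (m : ℕ) :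
    fourierCoeff chiC ((m : ℤ) + 1) =
      ((Real.pi : ℂ))⁻¹ * ∫ s in (-1 : ℝ)..1, (s : ℂ) ^ m := by
  have hpi : (Real.pi : ℂ) ≠ 0 := by exact_mod_cast Real.pi_ne_zero
  have hm : ((m : ℂ) + 1) ≠ 0 := by exact_mod_cast Nat.succ_ne_zero m
  set a : ℂ := -(Complex.I * (m + 1)) with ha
  have ha0 : a ≠ 0 := by simp [ha, hm]
  have hE : ∀ θ : ℝ, Complex.exp (-(Complex.I * (((m : ℤ) + 1 : ℤ) : ℂ) * θ)) =
      Complex.exp (a * θ) := fun θ => by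
    congr 1
    push_cast
    ring
  have h1 : ∫ θ in (0 : ℝ)..Real.pi, chi θ *
      Complex.exp (-(Complex.I * (((m : ℤ) + 1 : ℤ) : ℂ) * θ)) =
      ∫ θ in (0 : ℝ)..Real.pi, Complex.I * Complex.exp (a * θ) := by
    refine intervalIntegral.integral_congr_ae ?_
    filter_upwards [Measure.ae_ne volume Real.pi] with θ hne hθ
    rw [Set.uIoc_of_le Real.pi_pos.le] at hθ
    rw [hE, chi, if_pos (Real.sin_pos_of_pos_of_lt_pi hθ.1 (lt_of_le_of_ne hθ.2 hne))]
  have h2 : ∫ θ in Real.pi..(2 * Real.pi), chi θ *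
      Complex.exp (-(Complex.I * (((m : ℤ) + 1 : ℤ) : ℂ) * θ)) =
      ∫ θ in Real.pi..(2 * Real.pi), -Complex.I * Complex.exp (a * θ) := by
    refine intervalIntegral.integral_congr fun θ hθ => ?_
    rw [Set.uIcc_of_le (by linarith [Real.pi_pos])] at hθ
    have hs : Real.sin θ ≤ 0 := by
      have := Real.sin_nonneg_of_nonneg_of_le_pi (x := θ - Real.pi) (by linarith [hθ.1])
        (by linarith [hθ.2])
      rw [Real.sin_sub_pi] at this
      linarith
    rw [hE, chi, if_neg (not_lt.2 hs)]
  have hint : ∀ c d : ℝ, IntervalIntegrable (fun θ => chi θ *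
      Complex.exp (-(Complex.I * (((m : ℤ) + 1 : ℤ) : ℂ) * θ))) volume c d := fun c d => by
    have hmeas : Measurable chi := Measurable.ite
      (measurableSet_lt measurable_const Real.measurable_sin) measurable_const measurable_const
    have hc : IntervalIntegrable (fun θ : ℝ =>
        Complex.exp (-(Complex.I * (((m : ℤ) + 1 : ℤ) : ℂ) * θ))) volume c d :=
      Continuous.intervalIntegrable (by fun_prop) _ _
    rw [intervalIntegrable_iff] at hc ⊢
    refine hc.bdd_mul (c := 1) hmeas.aestronglyMeasurable (Eventually.of_forall fun θ => ?_)
    unfold chi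
    split_ifs <;> simp
  have hexp : Complex.exp (a * Real.pi) = (-1) ^ (m + 1) := by
    have : a * Real.pi = ((m + 1 : ℕ) : ℂ) * (-(Real.pi * Complex.I)) := by
      rw [ha]; push_cast; ring
    rw [this, Complex.exp_nat_mul, Complex.exp_neg, Complex.exp_pi_mul_I]
    norm_num
  have hexp2 : Complex.exp (a * (2 * Real.pi : ℝ)) = 1 := by
    have : a * (2 * Real.pi : ℝ) = a * Real.pi + a * Real.pi := by push_cast; ring
    rw [this, Complex.exp_add, hexp, ← mul_pow]
    norm_num
  rw [← fc_eq_fourierCoeff]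
  simp_rw [chiC_coe]
  rw [fc, ← intervalIntegral.integral_add_adjacent_intervals (hint 0 Real.pi) (hint _ _), h1, h2,
    intervalIntegral.integral_const_mul, intervalIntegral.integral_const_mul,
    integral_exp_mul_complex ha0, integral_exp_mul_complex ha0, hexp, hexp2]
  have h3 : ∫ s in (-1 : ℝ)..1, (s : ℂ) ^ m = (1 - (-1) ^ (m + 1)) / ((m : ℂ) + 1) := by
    have : ∀ s : ℝ, (s : ℂ) ^ m = ((s ^ m : ℝ) : ℂ) := fun s => by push_cast; rfl
    simp_rw [this]
    rw [intervalIntegral.integral_ofReal, integral_pow]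
    push_cast
    simp
  rw [h3]
  simp only [ha]
  push_cast
  simp only [mul_zero, Complex.exp_zero]
  field_simp
  ring

theorem memLp_top_chiC_mul_fourier :
    MemLp (fun x => chiC x * fourier (-1) x) ⊤ μC :=
  MemLp.of_bound (measurable_chiC.aestronglyMeasurable.mul
    (fourier (-1)).continuous.aestronglyMeasurable) 1
    (Eventually.of_forall fun x => by simp [norm_chiC, Circle.norm_coe])

/-- The involution `f(t) ↦ χ(t) t⁻¹ f(1/t)` on `L²` of the circle. -/
def chiFlip : L2C →L[ℂ] L2C := mulOp (fun x => chiC x * fourier (-1) x) ∘L flipOp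

theorem chiFlip_apply (u : L2C) :
    chiFlip u = mulOp (fun x => chiC x * fourier (-1) x) (flipOp u) := rfl

theorem chiFlip_chiFlip (u : L2C) : chiFlip (chiFlip u) = u := by
  rw [chiFlip_apply, chiFlip_apply, flipOp_mulOp memLp_top_chiC_mul_fourier, flipOp_flipOp]
  refine Lp.ext ?_
  filter_upwards [coeFn_mulOp memLp_top_chiC_mul_fourier
    (mulOp (fun x => chiC (-x) * fourier (-1) (-x)) u),
    coeFn_mulOp (memLp_top_neg memLp_top_chiC_mul_fourier) u, chiC_mul_chiC_neg] with x h1 h2 h3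
  have h4 : fourier (-1) x * fourier (-1) (-x) = (1 : ℂ) := by
    have : fourier (-1) (-x) = (fourier 1 x : ℂ) := by simp
    rw [this, ← fourier_add]
    simp
  rw [h1, h2]
  linear_combination (chiC x * chiC (-x) * u x) * h4 + u x * h3

theorem inner_fourierLp_chiFlip (j k : ℕ) :
    ⟪(fourierLp 2 (j : ℤ) : L2C), chiFlip (fourierLp 2 (k : ℤ))⟫_ℂ =
      fourierCoeff chiC (((j + k : ℕ) : ℤ) + 1) := by
  rw [chiFlip_apply, flipOp_fourierLp, inner_fourierLp_mulOp memLp_top_chiC_mul_fourier,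
    fourierCoeff_mul_fourier_neg_one]
  congr 1
  push_cast
  ring

/-- The Hankel operator of `χ` is nonnegative. -/
theorem re_inner_hankel_chi_nonneg (x : l2) :
    0 ≤ (⟪x, hardyProj (chiFlip (hardyEmb x))⟫_ℂ).re := by
  set K : l2 →L[ℂ] l2 := hardyProj ∘L chiFlip ∘L hardyEmb with hK
  change 0 ≤ (⟪x, K x⟫_ℂ).re
  have hent : ∀ j k : ℕ, ⟪ee j, K (ee k)⟫_ℂ =
      ((Real.pi : ℂ))⁻¹ * ∫ s in (-1 : ℝ)..1, (s : ℂ) ^ (j + k) := fun j k => by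
    rw [← fourierCoeff_chiC, ← inner_fourierLp_chiFlip, inner_ee]
    simp only [hK, ContinuousLinearMap.comp_apply]
    rw [hardyProj_apply, hardyEmb_ee]
  have hfin : ∀ (a : ℕ → ℂ) (n : ℕ), 0 ≤ (⟪∑ k ∈ Finset.range n, a k • ee k,
      K (∑ k ∈ Finset.range n, a k • ee k)⟫_ℂ).re := by
    intro a n
    let q : ℝ → ℂ := fun s => ∑ k ∈ Finset.range n, a k * (s : ℂ) ^ k
    have h1 : ⟪∑ k ∈ Finset.range n, a k • ee k, K (∑ k ∈ Finset.range n, a k • ee k)⟫_ℂ =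
        ((Real.pi : ℂ))⁻¹ * ∫ s in (-1 : ℝ)..1, ((‖q s‖ ^ 2 : ℝ) : ℂ) := by
      have h2 : ∀ s : ℝ, ((‖q s‖ ^ 2 : ℝ) : ℂ) = ∑ j ∈ Finset.range n, ∑ k ∈ Finset.range n,
          (starRingEnd ℂ (a j) * a k) * (s : ℂ) ^ (j + k) := fun s => by
        push_cast
        rw [← Complex.conj_mul', map_sum, Finset.sum_mul_sum]
        refine Finset.sum_congr rfl fun j _ => Finset.sum_congr rfl fun k _ => ?_
        rw [map_mul, map_pow, Complex.conj_ofReal]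
        ring
      simp_rw [h2]
      rw [intervalIntegral.integral_finsetSum fun j _ =>
        Continuous.intervalIntegrable (by fun_prop) _ _]
      rw [sum_inner, Finset.mul_sum]
      refine Finset.sum_congr rfl fun j _ => ?_
      rw [intervalIntegral.integral_finsetSum fun k _ =>
        Continuous.intervalIntegrable (by fun_prop) _ _, map_sum, inner_sum, Finset.mul_sum]
      refine Finset.sum_congr rfl fun k _ => ?_
      rw [map_smul, inner_smul_left, inner_smul_right, hent,
        intervalIntegral.integral_const_mul]
      ring
    rw [h1, intervalIntegral.integral_ofReal, ← Complex.ofReal_inv, ← Complex.ofReal_mul,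
      Complex.ofReal_re]
    refine mul_nonneg (inv_nonneg.2 Real.pi_pos.le) ?_
    exact intervalIntegral.integral_nonneg (by norm_num) fun s _ => by positivity
  have hlim := (hasSum_ee x).tendsto_sum_nat
  have hcont : Continuous fun y : l2 => (⟪y, K y⟫_ℂ).re := by fun_prop
  exact ge_of_tendsto' ((hcont.tendsto x).comp hlim) (hfin x)

/-- The involution `chiFlip` has no nonzero fixed point orthogonal to `H²`. -/
theorem eq_zero_of_chiFlip_eq_self {f : L2C} (hf : chiFlip f = f)
    (h0 : ∀ n : ℤ, 0 ≤ n → ⟪(fourierLp 2 n : L2C), f⟫_ℂ = 0) : f = 0 := by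
  have hχ : mulOp chiC f = -mulOp (fun x => fourier (-1) x) (flipOp f) := by
    conv_lhs => rw [← hf, chiFlip_apply]
    refine Lp.ext ?_
    filter_upwards [coeFn_mulOp memLp_top_chiC
      (mulOp (fun x => chiC x * fourier (-1) x) (flipOp f)),
      coeFn_mulOp memLp_top_chiC_mul_fourier (flipOp f),
      Lp.coeFn_neg (mulOp (fun x => fourier (-1) x) (flipOp f)),
      coeFn_mulOp (memLp_top_fourier (-1)) (flipOp f)] with x h1 h2 h3 h4
    rw [h1, h2, h3, Pi.neg_apply, h4]
    linear_combination (fourier (-1) x * flipOp f x) * chiC_mul_self x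
  have hadj : ∀ (n : ℤ) (u v : L2C), ⟪u, mulOp (fun x => fourier n x) v⟫_ℂ =
      ⟪mulOp (fun x => fourier (-n) x) u, v⟫_ℂ := fun n u v => by
    rw [inner_mulOp_left (memLp_top_fourier (-n))]
    simp_rw [← fourier_neg, neg_neg]
  have horth : ∀ n : ℤ, n ≤ 0 → ⟪mulOp (fun x => fourier n x) f, mulOp chiC f⟫_ℂ = 0 := by
    intro n hn
    rw [hχ, inner_neg_right, neg_eq_zero, ← fourierBasis.tsum_inner_mul_inner]
    refine (tsum_congr fun i => ?_).trans tsum_zero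
    rw [coe_fourierBasis]
    rcases lt_or_ge i 0 with hi | hi
    · rw [hadj, mulOp_fourierLp, inner_flipOp, flipOp_fourierLp, h0 _ (by omega), mul_zero]
    · rw [← inner_conj_symm, hadj, mulOp_fourierLp, h0 _ (by omega), map_zero, zero_mul]
  set h : Circ → ℂ := fun x => chiC x * (f x * starRingEnd ℂ (f x)) with hh
  have hint : Integrable h μC := by
    refine Integrable.bdd_mul (c := 1) ?_ measurable_chiC.aestronglyMeasurable
      (Eventually.of_forall fun x => (norm_chiC x).le)
    exact L2.integrable_inner (𝕜 := ℂ) f f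
  have hpos : ∀ n : ℤ, 0 ≤ n → ∫ x, fourier n x * h x ∂μC = 0 := by
    intro n hn
    rw [← horth (-n) (by omega), inner_mulOp memLp_top_chiC]
    refine integral_congr_ae ?_
    filter_upwards [coeFn_mulOp (memLp_top_fourier (-n)) f] with x h1
    rw [h1, map_mul, ← fourier_neg, neg_neg, hh]
    ring
  have hzero : h =ᵐ[μC] 0 := by
    refine ae_eq_zero_of_integral_fourier_mul hint fun n => ?_
    rcases le_or_gt 0 n with hn | hn
    · exact hpos n hn
    · have h1 : ∀ x, fourier n x * h x = -starRingEnd ℂ (fourier (-n) x * h x) := fun x => by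
        rw [map_mul, ← fourier_neg, neg_neg, hh]
        simp only [map_mul, Complex.conj_conj, conj_chiC]
        ring
      simp_rw [h1]
      rw [integral_neg, integral_conj, hpos (-n) (by omega)]
      simp
  refine Lp.ext ?_
  filter_upwards [hzero, Lp.coeFn_zero ℂ 2 μC] with x h1 h2
  have hne : chiC x ≠ 0 := norm_ne_zero_iff.1 (by rw [norm_chiC]; exact one_ne_zero)
  rw [h2]
  simpa [hh, hne] using h1

/-- The projection onto the fixed points of `chiFlip`. -/
def chiProj : L2C →L[ℂ] L2C := (2⁻¹ : ℂ) • (1 + chiFlip)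

theorem chiProj_apply (u : L2C) : chiProj u = (2⁻¹ : ℂ) • (u + chiFlip u) := rfl

theorem chiFlip_chiProj (u : L2C) : chiFlip (chiProj u) = chiProj u := by
  rw [chiProj_apply, map_smul, map_add, chiFlip_chiFlip, add_comm]

theorem chiProj_chiProj (u : L2C) : chiProj (chiProj u) = chiProj u := by
  conv_lhs => rw [chiProj_apply, chiFlip_chiProj]
  rw [← two_smul ℂ, smul_smul, inv_mul_cancel₀ (two_ne_zero (α := ℂ)), one_smul]

theorem exists_inverse_compression_chiProj : ∃ S : l2 →L[ℂ] l2,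
    (∀ x, hardyProj (chiProj (hardyEmb (S x))) = x) ∧
    (∀ x, S (hardyProj (chiProj (hardyEmb x))) = x) := by
  have hu : IsUnit (hardyProj ∘L chiProj ∘L hardyEmb) := by
    refine ContinuousLinearMap.isUnit_of_forall_le_norm_inner_map _ (c := 2⁻¹) (by norm_num)
      fun x => ?_
    rw [norm_inner_symm]
    refine le_trans ?_ (Complex.re_le_norm _)
    simp only [ContinuousLinearMap.comp_apply, chiProj_apply, map_smul, map_add,
      hardyProj_hardyEmb, inner_smul_right, inner_add_right, inner_self_eq_norm_sq_to_K]
    have h := re_inner_hankel_chi_nonneg x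
    have h2 : (2⁻¹ : ℂ) = ((2⁻¹ : ℝ) : ℂ) := by push_cast; rfl
    rw [h2, Complex.re_ofReal_mul, Complex.add_re]
    have h3 : (((‖x‖ : ℝ) : ℂ) ^ 2).re = ‖x‖ ^ 2 := by
      rw [← Complex.ofReal_pow, Complex.ofReal_re]
    simp only [Complex.coe_algebraMap, h3]
    push_cast
    linarith
  obtain ⟨U, hU⟩ := hu
  refine ⟨((U⁻¹ : (l2 →L[ℂ] l2)ˣ) : l2 →L[ℂ] l2), fun x => ?_, fun x => ?_⟩
  · have := congrArg (fun T : l2 →L[ℂ] l2 => T x) U.mul_inv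
    rw [hU] at this
    exact this
  · have := congrArg (fun T : l2 →L[ℂ] l2 => T x) U.inv_mul
    rw [hU] at this
    exact this

theorem memLp_top_of_continuous {f : Circ → ℂ} (hf : Continuous f) : MemLp f ⊤ μC :=
  MemLp.of_bound hf.aestronglyMeasurable ‖(⟨f, hf⟩ : C(Circ, ℂ))‖
    (Eventually.of_forall fun x => (⟨f, hf⟩ : C(Circ, ℂ)).norm_coe_le_norm x)

theorem chiProj_compression_chiProj {S : l2 →L[ℂ] l2}
    (hS : ∀ x, hardyProj (chiProj (hardyEmb (S x))) = x) (u : L2C) :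
    chiProj (hardyEmb (S (hardyProj (chiProj u)))) = chiProj u := by
  rw [← sub_eq_zero]
  refine eq_zero_of_chiFlip_eq_self ?_ fun n hn => ?_
  · rw [map_sub, chiFlip_chiProj, chiFlip_chiProj]
  · lift n to ℕ using hn
    rw [← hardyProj_apply, map_sub, hS, sub_self]
    rfl

/-- Multiplication by the boundary values of a holomorphic function preserves `H²`, and
multiplication by their flip preserves the orthogonal complement of `H²`. -/
theorem hardy_invariance {G : ℂ → ℂ} (hG : DiffContOnCl ℂ G (Metric.ball 0 1))
    (hc : MemLp (fun x : Circ => G (AddCircle.toCircle x)) ⊤ μC) :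
    (∀ x : l2, hardyEmb (hardyProj (mulOp (fun x => G (AddCircle.toCircle x)) (hardyEmb x))) =
      mulOp (fun x => G (AddCircle.toCircle x)) (hardyEmb x)) ∧
    ∀ u : L2C, hardyProj (mulOp (fun x => G (AddCircle.toCircle (-x))) (hardyEmb (hardyProj u))) =
      hardyProj (mulOp (fun x => G (AddCircle.toCircle (-x))) u) := by
  constructor
  · refine preserves_hardy fun n hn k => ?_
    rw [inner_fourierLp_mulOp hc, fourierCoeff_eq_zero_of_diffContOnCl hG (by omega)]
  · refine preserves_hardy_compl fun n hn k => ?_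
    rw [inner_fourierLp_mulOp (memLp_top_neg hc),
      fourierCoeff_comp_neg (fun x => G (AddCircle.toCircle x)),
      fourierCoeff_eq_zero_of_diffContOnCl hG (by omega)]

theorem chiFlip_mulOp {c : Circ → ℂ} (hc : MemLp c ⊤ μC) (u : L2C) :
    chiFlip (mulOp c u) = mulOp (fun x => c (-x)) (chiFlip u) := by
  rw [chiFlip_apply, flipOp_mulOp hc, mulOp_comm memLp_top_chiC_mul_fourier (memLp_top_neg hc),
    chiFlip_apply]

/-- The compression of `d χFlip c` to `H²` is a Hankel operator. -/
theorem hardyProj_mulOp_chiFlip_mulOp {c d : Circ → ℂ} (hc : MemLp c ⊤ μC) (hd : MemLp d ⊤ μC)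
    (j k : ℕ) :
    hardyProj (mulOp d (chiFlip (mulOp c (hardyEmb (ee k))))) j =
      fourierCoeff (fun x => d x * (c (-x) * chiC x)) ((j : ℤ) + k + 1) := by
  have hc' := memLp_top_neg hc
  have hprod : MemLp (fun x : Circ => d x * (c (-x) * chiC x) * fourier (-1) x) ⊤ μC := by
    have h1 : MemLp (fun x => c (-x) * chiC x) ⊤ μC := memLp_top_chiC.mul (r := ⊤) hc'
    have h2 : MemLp (fun x => d x * (c (-x) * chiC x)) ⊤ μC := h1.mul (r := ⊤) hd
    exact (memLp_top_fourier (-1)).mul (r := ⊤) h2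
  have h : mulOp d (chiFlip (mulOp c (hardyEmb (ee k)))) =
      mulOp (fun x => d x * (c (-x) * chiC x) * fourier (-1) x) (fourierLp 2 (-(k : ℤ))) := by
    rw [chiFlip_mulOp hc, hardyEmb_ee, chiFlip_apply, flipOp_fourierLp]
    refine Lp.ext ?_
    set e : L2C := fourierLp 2 (-(k : ℤ))
    filter_upwards [coeFn_mulOp hd (mulOp (fun x => c (-x))
        (mulOp (fun x => chiC x * fourier (-1) x) e)),
      coeFn_mulOp hc' (mulOp (fun x => chiC x * fourier (-1) x) e),
      coeFn_mulOp memLp_top_chiC_mul_fourier e, coeFn_mulOp hprod e] with x h1 h2 h3 h4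
    rw [h1, h2, h3, h4]
    ring
  rw [h, hardyProj_apply, inner_fourierLp_mulOp hprod,
    fourierCoeff_mul_fourier_neg_one (fun x => d x * (c (-x) * chiC x)), sub_neg_eq_add]

theorem hardy_compression_eq {c d : Circ → ℂ} (hc : MemLp c ⊤ μC) (hd : MemLp d ⊤ μC)
    (hcd : ∀ x, c x * d x = 1) (A : l2 →L[ℂ] l2)
    (hA : ∀ j k : ℕ, ent A j k = (if j = k then 1 else 0) +
      fourierCoeff (fun x => d x * (c (-x) * chiC x)) ((j : ℤ) + k + 1)) (x : l2) :
    A x = (2 : ℂ) • hardyProj (mulOp d (chiProj (mulOp c (hardyEmb x)))) := by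
  suffices h : A = (2 : ℂ) • (hardyProj ∘L mulOp d ∘L chiProj ∘L mulOp c ∘L hardyEmb) by
    rw [h]
    rfl
  refine clm_ext_ee fun k => lp.ext (funext fun j => ?_)
  have h2 : (A (ee k)) j = ent A j k := (inner_ee j _).symm
  have h3 : ((2 : ℂ) • (hardyProj ∘L mulOp d ∘L chiProj ∘L mulOp c ∘L hardyEmb)) (ee k) =
      ee k + hardyProj (mulOp d (chiFlip (mulOp c (hardyEmb (ee k))))) := by
    simp only [smul_apply, ContinuousLinearMap.comp_apply, chiProj_apply, map_smul, map_add]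
    rw [smul_smul, mul_inv_cancel₀ (two_ne_zero (α := ℂ)), one_smul,
      mulOp_mulOp_inv hd hc (fun x => by rw [mul_comm, hcd]), hardyProj_hardyEmb]
  rw [h2, hA, h3, lp.coeFn_add, Pi.add_apply, hardyProj_mulOp_chiFlip_mulOp hc hd]
  congr 1
  simp [ee, lp.single_apply, Pi.single_apply]

theorem mulOp_mulOp_chiProj {c : Circ → ℂ} (hc : MemLp c ⊤ μC) (u : L2C) :
    mulOp c (mulOp (fun x => c (-x)) (chiProj u)) =
      chiProj (mulOp c (mulOp (fun x => c (-x)) u)) := by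
  have hflip' : chiFlip (mulOp (fun x => c (-x)) u) = mulOp c (chiFlip u) := by
    rw [← chiFlip_chiFlip (mulOp c (chiFlip u)), chiFlip_mulOp hc, chiFlip_chiFlip]
  rw [chiProj_apply, chiProj_apply, map_smul, map_smul, map_add, map_add, chiFlip_mulOp hc,
    hflip', mulOp_comm hc (memLp_top_neg hc) (chiFlip u)]

/-- Invertibility of `I + H(ψ)` for `ψ(t) = c(t)⁻¹ c(1/t) χ(t)`, where multiplication by `c` and
by `d = c⁻¹` preserve `H²`. -/
theorem exists_inverse_of_multipliers {c d : Circ → ℂ} (hc : MemLp c ⊤ μC) (hd : MemLp d ⊤ μC)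
    (hcd : ∀ x, c x * d x = 1)
    (hM : ∀ x, hardyEmb (hardyProj (mulOp c (hardyEmb x))) = mulOp c (hardyEmb x))
    (hM' : ∀ x, hardyEmb (hardyProj (mulOp d (hardyEmb x))) = mulOp d (hardyEmb x))
    (hW : ∀ u, hardyProj (mulOp (fun x => c (-x)) (hardyEmb (hardyProj u))) =
      hardyProj (mulOp (fun x => c (-x)) u))
    (hW' : ∀ u, hardyProj (mulOp (fun x => d (-x)) (hardyEmb (hardyProj u))) =
      hardyProj (mulOp (fun x => d (-x)) u))
    (A : l2 →L[ℂ] l2)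
    (hA : ∀ j k : ℕ, ent A j k = (if j = k then 1 else 0) +
      fourierCoeff (fun x => d x * (c (-x) * chiC x)) ((j : ℤ) + k + 1)) :
    ∃ A' : l2 →L[ℂ] l2, A ∘L A' = 1 ∧ A' ∘L A = 1 := by
  obtain ⟨S, hS, hS'⟩ := exists_inverse_compression_chiProj
  have hdc : ∀ x, d x * c x = 1 := fun x => by rw [mul_comm, hcd]
  exact exists_inverse_compression hardyEmb hardyProj chiProj (mulOp c) (mulOp d)
    (mulOp fun x => c (-x)) (mulOp fun x => d (-x)) S hardyProj_hardyEmb chiProj_chiProj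
    (mulOp_mulOp_inv hc hd hcd) (mulOp_mulOp_inv hd hc hdc)
    (mulOp_mulOp_inv (memLp_top_neg hc) (memLp_top_neg hd) fun x => hcd (-x))
    (mulOp_mulOp_inv (memLp_top_neg hd) (memLp_top_neg hc) fun x => hdc (-x))
    (mulOp_mulOp_chiProj hc) hM hM' hW hW' hS hS'
    (chiProj_compression_chiProj hS) A (hardy_compression_eq hc hd hcd A hA)

theorem memLp_top_boundary {G : ℂ → ℂ} (hG : DiffContOnCl ℂ G (Metric.ball 0 1)) :
    MemLp (fun x : Circ => G (AddCircle.toCircle x)) ⊤ μC := by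
  refine memLp_top_of_continuous (hG.continuousOn.comp_continuous
    (continuous_subtype_val.comp AddCircle.continuous_toCircle) fun x => ?_)
  rw [closure_ball _ one_ne_zero]
  simp [Circle.norm_coe]

/-- Invertibility of `I + H(ψ)` for `ψ(t) = G(t)⁻¹ G(1/t) χ(t)`, where `G` and `K = G⁻¹` are
holomorphic in the disk and continuous up to the boundary. -/
theorem exists_inverse_of_symbol {G K : ℂ → ℂ} (hG : DiffContOnCl ℂ G (Metric.ball 0 1))
    (hK : DiffContOnCl ℂ K (Metric.ball 0 1)) (hGK : ∀ z : ℂ, ‖z‖ ≤ 1 → G z * K z = 1)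
    (A : l2 →L[ℂ] l2)
    (hA : ∀ j k : ℕ, ent A j k = (if j = k then 1 else 0) +
      fourierCoeff (fun x : Circ => K (AddCircle.toCircle x) *
        (G (AddCircle.toCircle (-x)) * chiC x)) ((j : ℤ) + k + 1)) :
    ∃ A' : l2 →L[ℂ] l2, A ∘L A' = 1 ∧ A' ∘L A = 1 := by
  have hc := memLp_top_boundary hG
  have hd := memLp_top_boundary hK
  obtain ⟨hM, hW⟩ := hardy_invariance hG hc
  obtain ⟨hM', hW'⟩ := hardy_invariance hK hd
  exact exists_inverse_of_multipliers (c := fun x => G (AddCircle.toCircle x))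
    (d := fun x => K (AddCircle.toCircle x)) hc hd
    (fun x => hGK _ (Circle.norm_coe _).le) hM hM' hW hW' A hA

/-- Let `c₊(z) = Σ γ_k z^k` with `Σ|γ_k| < ∞`, nonvanishing on the closed unit disk,
and `ψ(e^{iθ}) = c₊(e^{−iθ}) c₊(e^{iθ})⁻¹ χ(e^{iθ})`.  Then any bounded operator
`A = I + H(ψ)` on ℓ²(ℕ) is invertible. -/
theorem stmt3 (γ : ℕ → ℂ) (hγ : Summable fun k => ‖γ k‖)
    (hnz : ∀ z : ℂ, ‖z‖ ≤ 1 → (∑' k : ℕ, γ k * z ^ k) ≠ 0)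
    (ψ : ℝ → ℂ)
    (hψ : ∀ θ : ℝ, ψ θ =
      (∑' k : ℕ, γ k * Complex.exp (-(Complex.I * θ)) ^ k) *
        (∑' k : ℕ, γ k * Complex.exp (Complex.I * θ) ^ k)⁻¹ * chi θ)
    (A : l2 →L[ℂ] l2)
    (hA : ∀ j k : ℕ, ent A j k =
      (if j = k then 1 else 0) + fc ψ ((j : ℤ) + k + 1)) :
    ∃ A' : l2 →L[ℂ] l2, A ∘L A' = 1 ∧ A' ∘L A = 1 := by
  have hG := diffContOnCl_powerSeries hγ
  have hK : DiffContOnCl ℂ (fun z : ℂ => (∑' k : ℕ, γ k * z ^ k)⁻¹) (Metric.ball 0 1) :=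
    hG.inv fun z hz => by
      rw [closure_ball _ one_ne_zero] at hz
      exact hnz z (mem_closedBall_zero_iff.mp hz)
  refine exists_inverse_of_symbol hG hK (fun z hz => mul_inv_cancel₀ (hnz z hz)) A fun j k => ?_
  rw [hA, ← fc_eq_fourierCoeff]
  congr 2
  funext θ
  have h : ((AddCircle.toCircle (-(θ : Circ)) : Circle) : ℂ) =
      Complex.exp (-(Complex.I * θ)) := by
    rw [AddCircle.toCircle_neg, Circle.coe_inv, toCircle_coe, Complex.exp_neg]
  rw [hψ, h, toCircle_coe, chiC_coe]
  ring

end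
end

section
/- Let a : T → ℂ have absolutely summable Fourier coefficients (Σ_{k∈ℤ}|a_k| < ∞), be nonvanishing on T, and be even (a_k = a_{−k} for all k). Then there exist G ∈ ℂ and a sequence (γ_k)_{k≥0} with Σ|γ_k| < ∞ such that the function a₊(z) = Σ_{k≥0} γ_k z^k satisfies a₊(0) = 1, a₊(z) ≠ 0 for all |z| ≤ 1, and a(e^{iθ}) = a₊(e^{−iθ}) · G · a₊(e^{iθ}) for all θ; moreover G = exp([ℓ]_0) for any continuous function ℓ : T → ℂ with a = exp(ℓ), where [ℓ]_0 = (1/(2π))∫_0^{2π} ℓ(e^{iθ}) dθ. -/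
open Filter MeasureTheory

noncomputable section

/-- A family of functions bounded by `1`, indexed multiplicatively by an additive monoid; the
examples are `θ ↦ exp (ikθ)` for `k : ℤ`, and `z ↦ z ^ k` on the closed disc for `k : ℕ`. -/
structure IsCharFamily {M X : Type} [AddMonoid M] (e : M → X → ℂ) : Prop where
  zero : ∀ x, e 0 x = 1
  add : ∀ m n x, e (m + n) x = e m x * e n x
  norm_le : ∀ m x, ‖e m x‖ ≤ 1

/-- `f` is the sum of an absolutely convergent series `∑ c m * e m`, with `∑ ‖c m‖ ≤ C`. -/
def WienerBound {M X : Type} (e : M → X → ℂ) (f : X → ℂ) (C : ℝ) : Prop :=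
  ∃ c : M → ℂ, (Summable fun m => ‖c m‖) ∧ ∑' m, ‖c m‖ ≤ C ∧
    ∀ x, HasSum (fun m => c m * e m x) (f x)

theorem IsCharFamily.summable {M X ι : Type} [AddMonoid M] {e : M → X → ℂ} (he : IsCharFamily e)
    {d : ι → ℂ} (hd : Summable fun i => ‖d i‖) (m : ι → M) (x : X) :
    Summable fun i => d i * e (m i) x := by
  refine Summable.of_norm_bounded hd fun i => ?_
  rw [norm_mul]
  exact mul_le_of_le_one_right (norm_nonneg _) (he.norm_le _ _)

namespace WienerBound

variable {M X : Type} {e : M → X → ℂ} {f g : X → ℂ} {C D : ℝ}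

theorem nonneg (hf : WienerBound e f C) : 0 ≤ C := by
  obtain ⟨c, -, hC, -⟩ := hf
  exact (tsum_nonneg fun _ => norm_nonneg _).trans hC

theorem mono (hf : WienerBound e f C) (h : C ≤ D) : WienerBound e f D := by
  obtain ⟨c, hc, hC, hs⟩ := hf
  exact ⟨c, hc, hC.trans h, hs⟩

theorem add (hf : WienerBound e f C) (hg : WienerBound e g D) :
    WienerBound e (fun x => f x + g x) (C + D) := by
  obtain ⟨c, hc, hC, hs⟩ := hf
  obtain ⟨d, hd, hD, ht⟩ := hg
  have hcd : Summable fun m => ‖c m + d m‖ :=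
    (hc.add hd).of_nonneg_of_le (fun _ => norm_nonneg _) fun _ => norm_add_le _ _
  refine ⟨fun m => c m + d m, hcd, ?_, fun x => ?_⟩
  · calc ∑' m, ‖c m + d m‖ ≤ ∑' m, (‖c m‖ + ‖d m‖) :=
          hcd.tsum_le_tsum (fun _ => norm_add_le _ _) (hc.add hd)
      _ ≤ C + D := by rw [hc.tsum_add hd]; gcongr
  · simpa only [add_mul] using (hs x).add (ht x)

theorem const_mul (a : ℂ) (hf : WienerBound e f C) :
    WienerBound e (fun x => a * f x) (‖a‖ * C) := by
  obtain ⟨c, hc, hC, hs⟩ := hf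
  refine ⟨fun m => a * c m, ?_, ?_, fun x => ?_⟩
  · simpa only [norm_mul] using hc.mul_left ‖a‖
  · simp only [norm_mul, tsum_mul_left]
    gcongr
  · simpa only [mul_assoc] using (hs x).mul_left a

theorem zero : WienerBound e (fun _ => 0) 0 :=
  ⟨fun _ => 0, by simp, by simp, fun x => by simp⟩

theorem finset_sum {ι : Type} (s : Finset ι) {F : ι → X → ℂ} {B : ι → ℝ}
    (h : ∀ i ∈ s, WienerBound e (F i) (B i)) :
    WienerBound e (fun x => ∑ i ∈ s, F i x) (∑ i ∈ s, B i) := by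
  classical
  induction s using Finset.induction_on with
  | empty => simpa using zero
  | insert i s his ih =>
    simp only [Finset.sum_insert his]
    exact (h i (by simp)).add (ih fun j hj => h j (by simp [hj]))

variable [AddMonoid M]

theorem norm_le (he : IsCharFamily e) (hf : WienerBound e f C) (x : X) : ‖f x‖ ≤ C := by
  obtain ⟨c, hc, hC, hs⟩ := hf
  rw [← (hs x).tsum_eq]
  have h : ∀ m, ‖c m * e m x‖ ≤ ‖c m‖ := fun m => by
    rw [norm_mul]
    exact mul_le_of_le_one_right (norm_nonneg _) (he.norm_le _ _)
  exact (tsum_of_norm_bounded hc.hasSum h).trans hC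

/-- An absolutely convergent series of characters, with repetitions allowed. -/
theorem of_series {ι : Type} (he : IsCharFamily e) {d : ι → ℂ} (hd : Summable fun i => ‖d i‖)
    (m : ι → M) : WienerBound e (fun x => ∑' i, d i * e (m i) x) (∑' i, ‖d i‖) := by
  have hfib := hd.hasSum.tsum_fiberwise m
  have hle : ∀ k, ‖∑' i : m ⁻¹' {k}, d i‖ ≤ ∑' i : m ⁻¹' {k}, ‖d i‖ := fun k =>
    norm_tsum_le_tsum_norm (hd.subtype _)
  have hc : Summable fun k => ‖∑' i : m ⁻¹' {k}, d i‖ :=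
    hfib.summable.of_nonneg_of_le (fun _ => norm_nonneg _) hle
  refine ⟨fun k => ∑' i : m ⁻¹' {k}, d i, hc, ?_, fun x => ?_⟩
  · rw [← hfib.tsum_eq]
    exact hc.tsum_le_tsum hle hfib.summable
  · have hk : ∀ k, (∑' i : m ⁻¹' {k}, d i) * e k x = ∑' i : m ⁻¹' {k}, d i * e (m i) x := by
      intro k
      rw [← tsum_mul_right]
      refine tsum_congr fun i => ?_
      rw [show m i = k from i.2]
    simp only [hk]
    exact (he.summable hd m x).hasSum.tsum_fiberwise m

theorem char (he : IsCharFamily e) (m : M) : WienerBound e (e m) 1 := by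
  have h := of_series he (ι := Unit) (d := fun _ => 1) (hasSum_fintype _).summable fun _ => m
  simpa using h

theorem const (he : IsCharFamily e) (a : ℂ) : WienerBound e (fun _ => a) ‖a‖ := by
  simpa [he.zero] using (char he 0).const_mul a

theorem mul (he : IsCharFamily e) (hf : WienerBound e f C) (hg : WienerBound e g D) :
    WienerBound e (fun x => f x * g x) (C * D) := by
  have hC0 := hf.nonneg
  obtain ⟨c, hc, hC, hs⟩ := hf
  obtain ⟨d, hd, hD, ht⟩ := hg
  have hcd : Summable fun p : M × M => ‖c p.1 * d p.2‖ := hc.mul_norm hd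
  have h := of_series he hcd fun p => p.1 + p.2
  have hval : (fun x => ∑' p : M × M, c p.1 * d p.2 * e (p.1 + p.2) x) = fun x => f x * g x := by
    funext x
    rw [← (hs x).tsum_eq, ← (ht x).tsum_eq]
    have h1 : Summable fun m => ‖c m * e m x‖ := (he.summable hc id x).norm
    have h2 : Summable fun m => ‖d m * e m x‖ := (he.summable hd id x).norm
    rw [tsum_mul_tsum_of_summable_norm h1 h2]
    refine tsum_congr fun p => ?_
    rw [he.add]
    ring
  rw [hval] at h
  refine h.mono ?_
  have h1 : ∑' p : M × M, ‖c p.1 * d p.2‖ = (∑' m, ‖c m‖) * ∑' m, ‖d m‖ := by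
    rw [tsum_mul_tsum_of_summable_norm (by simpa using hc) (by simpa using hd)]
    simp only [norm_mul]
  rw [h1]
  exact mul_le_mul hC hD (tsum_nonneg fun _ => norm_nonneg _) hC0

theorem pow (he : IsCharFamily e) (hf : WienerBound e f C) (n : ℕ) :
    WienerBound e (fun x => f x ^ n) (C ^ n) := by
  induction n with
  | zero => simpa using const he 1
  | succ n ih => simpa only [pow_succ] using ih.mul he hf

theorem hasSum (he : IsCharFamily e) {F : ℕ → X → ℂ} {B : ℕ → ℝ}
    (hF : ∀ n, WienerBound e (F n) (B n)) (hB : Summable B)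
    (hf : ∀ x, HasSum (fun n => F n x) (f x)) : WienerBound e f (∑' n, B n) := by
  choose c hc hC hs using hF
  have hfst : Summable fun n => ∑' m, ‖c n m‖ :=
    hB.of_nonneg_of_le (fun _ => tsum_nonneg fun _ => norm_nonneg _) hC
  have hsum : Summable fun p : ℕ × M => ‖c p.1 p.2‖ :=
    (summable_prod_of_nonneg fun _ => norm_nonneg _).2 ⟨hc, hfst⟩
  have h := of_series he hsum Prod.snd
  have hval : (fun x => ∑' p : ℕ × M, c p.1 p.2 * e p.2 x) = f := by
    funext x
    rw [(he.summable hsum Prod.snd x).tsum_prod, ← (hf x).tsum_eq]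
    exact tsum_congr fun n => (hs n x).tsum_eq
  rw [hval] at h
  refine h.mono ?_
  rw [hsum.tsum_prod]
  exact hfst.tsum_le_tsum hC hB

theorem exp (he : IsCharFamily e) (hf : WienerBound e f C) :
    WienerBound e (fun x => Complex.exp (f x)) (∑' n : ℕ, ‖((n.factorial : ℂ))⁻¹‖ * C ^ n) := by
  refine hasSum he (fun n => (hf.pow he n).const_mul ((n.factorial : ℂ))⁻¹) ?_ fun x => ?_
  · refine (Real.summable_pow_div_factorial C).congr fun n => ?_
    rw [norm_inv, Complex.norm_natCast]
    ring
  · rw [Complex.exp_eq_exp_ℂ]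
    refine (NormedSpace.expSeries_div_hasSum_exp (f x)).congr_fun fun n => ?_
    ring

end WienerBound

/-- The characters of the circle, in the angular variable. -/
def circleChar (k : ℤ) (θ : ℝ) : ℂ := Complex.exp (Complex.I * k * θ)

/-- The monomials on the closed unit disc. -/
def discChar (k : ℕ) (z : {z : ℂ // ‖z‖ ≤ 1}) : ℂ := (z : ℂ) ^ k

theorem norm_circleChar (k : ℤ) (θ : ℝ) : ‖circleChar k θ‖ = 1 := by
  rw [circleChar, Complex.norm_exp]
  simp

theorem isCharFamily_circleChar : IsCharFamily circleChar where
  zero θ := by simp [circleChar]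
  add m n θ := by
    simp only [circleChar, ← Complex.exp_add]
    push_cast
    ring_nf
  norm_le m θ := (norm_circleChar m θ).le

theorem isCharFamily_discChar : IsCharFamily discChar where
  zero z := by simp [discChar]
  add m n z := by simp [discChar, pow_add]
  norm_le m z := by
    rw [discChar, norm_pow]
    exact pow_le_one₀ (norm_nonneg _) z.2

theorem continuous_circleChar (k : ℤ) : Continuous (circleChar k) := by
  unfold circleChar
  fun_prop

theorem circleChar_natCast (k : ℕ) (θ : ℝ) :
    circleChar k θ = Complex.exp (Complex.I * θ) ^ k := by
  rw [circleChar, ← Complex.exp_nat_mul]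
  push_cast
  ring_nf

theorem circleChar_neg (k : ℤ) (θ : ℝ) : circleChar k (-θ) = circleChar (-k) θ := by
  simp [circleChar]

theorem WienerBound.continuous {f : ℝ → ℂ} {C : ℝ} (hf : WienerBound circleChar f C) :
    Continuous f := by
  obtain ⟨c, hc, -, hs⟩ := hf
  rw [show f = fun θ => ∑' k, c k * circleChar k θ from funext fun θ => (hs θ).tsum_eq.symm]
  refine continuous_tsum (fun k => (continuous_circleChar k).const_mul _) hc fun k θ => ?_
  rw [norm_mul, norm_circleChar, mul_one]

theorem integral_circleChar (k : ℤ) :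
    ∫ θ in (0:ℝ)..(2 * Real.pi), circleChar k θ = if k = 0 then 2 * (Real.pi : ℂ) else 0 := by
  unfold circleChar
  split_ifs with hk
  · subst hk
    simp
  · rw [integral_exp_mul_complex (by simpa using hk)]
    have h : Complex.exp (Complex.I * k * ((2 * Real.pi : ℝ) : ℂ)) = 1 :=
      Complex.exp_eq_one_iff.2 ⟨k, by push_cast; ring⟩
    rw [h]
    simp

theorem integral_eq_of_hasSum_circleChar {f : ℝ → ℂ} {c : ℤ → ℂ} (hc : Summable fun k => ‖c k‖)
    (hf : ∀ θ, HasSum (fun k => c k * circleChar k θ) (f θ)) :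
    ∫ θ in (0:ℝ)..(2 * Real.pi), f θ = 2 * Real.pi * c 0 := by
  have h := intervalIntegral.hasSum_integral_of_dominated_convergence (μ := volume)
    (a := 0) (b := 2 * Real.pi) (F := fun k θ => c k * circleChar k θ) (f := f)
    (fun k _ => ‖c k‖)
    (fun k => ((continuous_circleChar k).const_mul _).aestronglyMeasurable)
    (fun k => .of_forall fun θ _ => by rw [norm_mul, norm_circleChar, mul_one])
    (.of_forall fun _ _ => hc) (by simp) (.of_forall fun θ _ => hf θ)
  simp only [intervalIntegral.integral_const_mul, integral_circleChar] at h
  rw [← h.tsum_eq, tsum_eq_single 0 fun k hk => by simp [hk]]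
  simp [mul_comm]

theorem eq_add_of_exp_eq_exp {u v : ℝ → ℂ} (hu : Continuous u) (hv : Continuous v)
    (h : ∀ θ, Complex.exp (u θ) = Complex.exp (v θ)) :
    ∃ n : ℤ, ∀ θ, u θ = v θ + n * (2 * Real.pi * Complex.I) := by
  obtain ⟨n, hn⟩ := Complex.exp_eq_exp_iff_exists_int.1 (h 0)
  refine ⟨n, fun θ => ?_⟩
  refine congrFun (Complex.isCoveringMap_exp.eq_of_comp_eq hu
    (hv.add continuous_const) (funext fun x => Subtype.ext ?_) 0 hn) θ
  simp only [Function.comp_apply, Pi.add_apply]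
  rw [h x]
  exact Complex.exp_eq_exp_iff_exists_int.2 ⟨-n, by push_cast; ring⟩

theorem exists_continuous_log {a : ℝ → ℂ} (ha : Continuous a) (hnz : ∀ θ, a θ ≠ 0) :
    ∃ u : ℝ → ℂ, Continuous u ∧ ∀ θ, a θ = Complex.exp (u θ) := by
  obtain ⟨u, ⟨-, hu⟩, -⟩ := Complex.isCoveringMapOn_exp.existsUnique_continuousMap_lifts
    (⟨a, ha⟩ : C(ℝ, ℂ)) (a₀ := 0) (e₀ := Complex.log (a 0)) (Complex.exp_log (hnz 0)) hnz
  exact ⟨u, u.continuous, fun θ => (congrFun hu θ).symm⟩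

theorem log_even {a u : ℝ → ℂ} (hu : Continuous u) (hau : ∀ θ, a θ = Complex.exp (u θ))
    (ha : ∀ θ, a (-θ) = a θ) (θ : ℝ) : u (-θ) = u θ := by
  obtain ⟨n, hn⟩ := eq_add_of_exp_eq_exp (hu.comp continuous_neg) hu fun θ => by
    rw [Function.comp_apply, ← hau, ← hau, ha]
  have h0 := hn 0
  simp only [Function.comp_apply, neg_zero, left_eq_add] at h0
  simpa [h0] using hn θ

theorem log_periodic {a u : ℝ → ℂ} (hu : Continuous u) (hau : ∀ θ, a θ = Complex.exp (u θ))
    (ha : ∀ θ, a (-θ) = a θ) (hper : Function.Periodic a (2 * Real.pi)) :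
    Function.Periodic u (2 * Real.pi) := by
  obtain ⟨n, hn⟩ := eq_add_of_exp_eq_exp (hu.comp (continuous_add_const (2 * Real.pi))) hu
    fun θ => by rw [Function.comp_apply, ← hau, ← hau, hper]
  have h0 := hn (-Real.pi)
  simp only [Function.comp_apply] at h0
  rw [show -Real.pi + 2 * Real.pi = Real.pi by ring, log_even hu hau ha, left_eq_add] at h0
  intro θ
  simpa [h0] using hn θ

theorem exists_wienerBound_approx {u : ℝ → ℂ} (hu : Continuous u)
    (hper : Function.Periodic u (2 * Real.pi)) {ε : ℝ} (hε : 0 < ε) :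
    ∃ (p : ℝ → ℂ) (C : ℝ), WienerBound circleChar p C ∧ ∀ θ, ‖u θ - p θ‖ < ε := by
  have : Fact (0 < 2 * Real.pi) := ⟨Real.two_pi_pos⟩
  let U : C(AddCircle (2 * Real.pi), ℂ) :=
    ⟨hper.lift, continuous_quot_lift _ hu⟩
  have hU : U ∈ (Submodule.span ℂ (Set.range (@fourier (2 * Real.pi)))).topologicalClosure := by
    rw [span_fourier_closure_eq_top]
    trivial
  obtain ⟨q, hq, hUq⟩ := Metric.mem_closure_iff.1 hU ε hε
  have hW : ∀ q ∈ Submodule.span ℂ (Set.range (@fourier (2 * Real.pi))),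
      ∃ C, WienerBound circleChar (fun θ : ℝ => q θ) C := by
    intro q hq
    induction hq using Submodule.span_induction with
    | mem q h =>
      obtain ⟨k, rfl⟩ := h
      refine ⟨1, ?_⟩
      convert WienerBound.char isCharFamily_circleChar k using 2 with θ
      rw [fourier_coe_apply, circleChar]
      congr 1
      have : (Real.pi : ℂ) ≠ 0 := by exact_mod_cast Real.pi_ne_zero
      push_cast
      field_simp
    | zero => exact ⟨0, WienerBound.zero⟩
    | add q r _ _ h1 h2 =>
      obtain ⟨C, hC⟩ := h1
      obtain ⟨D, hD⟩ := h2
      exact ⟨_, hC.add hD⟩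
    | smul a q _ h =>
      obtain ⟨C, hC⟩ := h
      exact ⟨_, hC.const_mul a⟩
  obtain ⟨C, hC⟩ := hW q hq
  refine ⟨fun θ => q θ, C, hC, fun θ => ?_⟩
  have h := (ContinuousMap.dist_apply_le_dist (f := U) (g := q) (θ : AddCircle (2 * Real.pi)))
  rw [dist_eq_norm] at h
  exact h.trans_lt hUq

theorem Polynomial.norm_coeff_le_of_norm_eval_le {P : Polynomial ℂ} {B : ℝ}
    (hB : ∀ z : ℂ, ‖z‖ = 1 → ‖P.eval z‖ ≤ B) (j : ℕ) : ‖P.coeff j‖ ≤ B := by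
  have hd : ∀ k, deriv^[k] (fun z => P.eval z) = fun z => (Polynomial.derivative^[k] P).eval z := by
    intro k
    induction k with
    | zero => rfl
    | succ k ih =>
      rw [Function.iterate_succ_apply', ih, Function.iterate_succ_apply']
      funext z
      exact Polynomial.deriv _
  have h := Complex.norm_iteratedDeriv_le_of_forall_mem_sphere_norm_le (c := 0) (C := B) j one_pos
    (f := fun z => P.eval z) P.differentiable.diffContOnCl fun z hz => hB z (by simpa using hz)
  rw [iteratedDeriv_eq_iterate, hd] at h
  beta_reduce at h
  rw [← Polynomial.coeff_zero_eq_eval_zero,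
    Polynomial.coeff_iterate_derivative, zero_add, Nat.descFactorial_self, nsmul_eq_mul, norm_mul,
    Complex.norm_natCast, one_pow, div_one] at h
  exact le_of_mul_le_mul_left h (by positivity)

/-- The Wiener norms of the powers of a trigonometric polynomial grow at most like those of its
supremum norm, up to a polynomial factor. -/
theorem WienerBound.trigPolynomial_pow (s : Finset ℤ) (c : ℤ → ℂ) {B : ℝ}
    (hB : ∀ θ, ‖∑ k ∈ s, c k * circleChar k θ‖ ≤ B) :
    ∃ N : ℕ, ∀ n : ℕ, WienerBound circleChar (fun θ => (∑ k ∈ s, c k * circleChar k θ) ^ n)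
      ((2 * N * n + 1) * B ^ n) := by
  set N := s.sup Int.natAbs with hN
  have hsN : ∀ k ∈ s, k.natAbs ≤ N := fun k hk => Finset.le_sup (f := Int.natAbs) hk
  set P : Polynomial ℂ := ∑ k ∈ s, Polynomial.C (c k) * Polynomial.X ^ (k + N).toNat with hP
  have hdeg : P.natDegree ≤ 2 * N := by
    refine Polynomial.natDegree_sum_le_of_forall_le s _ fun k hk => ?_
    refine (Polynomial.natDegree_C_mul_X_pow_le _ _).trans ?_
    have := hsN k hk
    omega
  have heval : ∀ θ : ℝ, P.eval (Complex.exp (Complex.I * θ)) =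
      circleChar N θ * ∑ k ∈ s, c k * circleChar k θ := by
    intro θ
    rw [hP, Polynomial.eval_finsetSum, Finset.mul_sum]
    refine Finset.sum_congr rfl fun k hk => ?_
    have hk' : (((k + N).toNat : ℕ) : ℤ) = k + N := by
      have := hsN k hk
      omega
    rw [Polynomial.eval_mul, Polynomial.eval_C, Polynomial.eval_pow, Polynomial.eval_X,
      ← circleChar_natCast, hk', isCharFamily_circleChar.add]
    ring
  refine ⟨N, fun n => ?_⟩
  have hcoeff : ∀ j, ‖(P ^ n).coeff j‖ ≤ B ^ n := by
    refine Polynomial.norm_coeff_le_of_norm_eval_le fun z hz => ?_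
    obtain ⟨θ, rfl⟩ := (Complex.norm_eq_one_iff z).1 hz
    rw [mul_comm (θ : ℂ), Polynomial.eval_pow, norm_pow, heval, norm_mul, norm_circleChar, one_mul]
    gcongr
    exact hB θ
  have hrepr : (fun θ => (∑ k ∈ s, c k * circleChar k θ) ^ n) = fun θ =>
      circleChar (-N) θ ^ n *
        ∑ j ∈ Finset.range (2 * N * n + 1), (P ^ n).coeff j * circleChar j θ := by
    funext θ
    have hlt : (P ^ n).natDegree < 2 * N * n + 1 := by
      rw [Nat.lt_succ_iff, mul_comm]
      exact Polynomial.natDegree_pow_le_of_le n hdeg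
    have h1 := Polynomial.eval_eq_sum_range' hlt (Complex.exp (Complex.I * θ))
    simp only [← circleChar_natCast] at h1
    rw [← h1, Polynomial.eval_pow, heval, ← mul_pow, ← mul_assoc, ← isCharFamily_circleChar.add,
      neg_add_cancel, isCharFamily_circleChar.zero, one_mul]
  rw [hrepr]
  have h := ((char isCharFamily_circleChar (-N : ℤ)).pow isCharFamily_circleChar n).mul
    isCharFamily_circleChar (finset_sum (Finset.range (2 * N * n + 1)) fun (j : ℕ) _ =>
      ((char isCharFamily_circleChar (j : ℤ)).const_mul ((P ^ n).coeff j)).mono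
        ((mul_one _).le.trans (hcoeff j)))
  refine h.mono (le_of_eq ?_)
  simp

theorem WienerBound.exists_split {f : ℝ → ℂ} {C ε : ℝ} (hf : WienerBound circleChar f C)
    (hε : 0 < ε) : ∃ (s : Finset ℤ) (c : ℤ → ℂ),
      WienerBound circleChar (fun θ => f θ - ∑ k ∈ s, c k * circleChar k θ) ε := by
  classical
  obtain ⟨c, hc, -, hs⟩ := hf
  obtain ⟨s, hsε⟩ := ((tendsto_order.1 (tendsto_tsum_compl_atTop_zero fun k => ‖c k‖)).2 ε hε).exists
  refine ⟨s, c, ?_⟩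
  have h := of_series isCharFamily_circleChar (hc.subtype {k | k ∉ s}) Subtype.val
  have hval : (fun θ => ∑' k : {k // k ∉ s}, c k * circleChar k θ) =
      fun θ => f θ - ∑ k ∈ s, c k * circleChar k θ := by
    funext θ
    rw [← (hs θ).tsum_eq, eq_sub_iff_add_eq']
    exact (hs θ).summable.sum_add_tsum_compl
  exact hval ▸ h.mono hsε.le

/-- The Wiener norms of the powers of `f` decay geometrically when `‖f‖ ≤ 1 / 2` uniformly. -/
theorem WienerBound.pow_decay {f : ℝ → ℂ} {C : ℝ} (hf : WienerBound circleChar f C)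
    (hsup : ∀ θ, ‖f θ‖ ≤ 1 / 2) :
    ∃ N : ℕ, ∀ n : ℕ, WienerBound circleChar (fun θ => f θ ^ n)
      ((2 * N * n + 1) * (3 / 4 : ℝ) ^ n) := by
  obtain ⟨s, c, hh⟩ := hf.exists_split (ε := 1 / 8) (by norm_num)
  set t : ℝ → ℂ := fun θ => ∑ k ∈ s, c k * circleChar k θ with ht
  have htsup : ∀ θ, ‖t θ‖ ≤ 5 / 8 := by
    intro θ
    have h1 := hh.norm_le isCharFamily_circleChar θ
    have h2 := norm_sub_le (f θ) (f θ - t θ)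
    rw [sub_sub_cancel] at h2
    linarith [hsup θ]
  obtain ⟨N, hN⟩ := trigPolynomial_pow s c htsup
  refine ⟨N, fun n => ?_⟩
  have hrepr : (fun θ => f θ ^ n) = fun θ => ∑ m ∈ Finset.range (n + 1),
      (n.choose m : ℂ) * (t θ ^ m * (f θ - t θ) ^ (n - m)) := by
    funext θ
    conv_lhs => rw [← add_sub_cancel (t θ) (f θ), add_pow]
    exact Finset.sum_congr rfl fun m _ => by ring
  rw [hrepr]
  refine (finset_sum _ fun m _ => (((hN m).mul isCharFamily_circleChar
    (hh.pow isCharFamily_circleChar (n - m))).const_mul (n.choose m : ℂ))).mono ?_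
  rw [show (3 / 4 : ℝ) = 5 / 8 + 1 / 8 by norm_num, add_pow, Finset.mul_sum]
  refine Finset.sum_le_sum fun m hm => ?_
  have hmn : (m : ℝ) ≤ n := by exact_mod_cast Nat.lt_succ_iff.1 (Finset.mem_range.1 hm)
  rw [Complex.norm_natCast]
  calc (n.choose m : ℝ) * ((2 * N * m + 1) * (5 / 8) ^ m * (1 / 8) ^ (n - m))
      ≤ (n.choose m : ℝ) * ((2 * N * n + 1) * (5 / 8) ^ m * (1 / 8) ^ (n - m)) := by gcongr
    _ = _ := by ring

theorem WienerBound.log_one_add {f : ℝ → ℂ} {C : ℝ} (hf : WienerBound circleChar f C)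
    (hsup : ∀ θ, ‖f θ‖ ≤ 1 / 2) :
    ∃ D, WienerBound circleChar (fun θ => Complex.log (1 + f θ)) D := by
  obtain ⟨N, hN⟩ := hf.pow_decay hsup
  refine ⟨_, hasSum isCharFamily_circleChar
    (fun n => ((hN n).const_mul ((-1) ^ (n + 1) / n)).mono (D := (2 * N * n + 1) * (3 / 4 : ℝ) ^ n)
      ?_) ?_ fun θ => ?_⟩
  · refine mul_le_of_le_one_left (by positivity) ?_
    rw [norm_div, norm_pow, norm_neg, norm_one, one_pow, Complex.norm_natCast, one_div]
    exact Nat.cast_inv_le_one n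
  · have h1 := summable_pow_mul_geometric_of_norm_lt_one 1 (r := (3 / 4 : ℝ)) (by norm_num)
    have h0 := summable_geometric_of_norm_lt_one (x := (3 / 4 : ℝ)) (by norm_num)
    refine ((h1.mul_left (2 * N : ℝ)).add h0).congr fun n => ?_
    ring
  · refine (Complex.hasSum_taylorSeries_log ((hsup θ).trans_lt (by norm_num))).congr_fun fun n => ?_
    ring

/-- A Wiener–Lévy theorem: a nonvanishing even function in the Wiener algebra has a logarithm in
the Wiener algebra. -/
theorem WienerBound.exists_log {a : ℝ → ℂ} {C : ℝ} (ha : WienerBound circleChar a C)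
    (hnz : ∀ θ, a θ ≠ 0) (heven : ∀ θ, a (-θ) = a θ) (hper : Function.Periodic a (2 * Real.pi)) :
    ∃ (u : ℝ → ℂ) (D : ℝ), WienerBound circleChar u D ∧ ∀ θ, a θ = Complex.exp (u θ) := by
  have hexp : Tendsto (fun z : ℂ => Complex.exp z - 1) (nhds 0) (nhds 0) := by
    have h : Continuous fun z : ℂ => Complex.exp z - 1 := by fun_prop
    simpa using h.tendsto 0
  obtain ⟨δ, hδ, hδexp⟩ := Metric.tendsto_nhds_nhds.1 hexp (1 / 2) (by norm_num)
  obtain ⟨v, hv, hav⟩ := exists_continuous_log ha.continuous hnz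
  obtain ⟨p, B, hp, hvp⟩ := exists_wienerBound_approx hv (log_periodic hv hav heven hper) hδ
  have hexpneg := (hp.const_mul (-1)).exp isCharFamily_circleChar
  have hf := (ha.mul isCharFamily_circleChar hexpneg).add
    (const isCharFamily_circleChar (-1))
  have hfv : ∀ θ, a θ * Complex.exp (-1 * p θ) + -1 = Complex.exp (v θ - p θ) - 1 := fun θ => by
    rw [hav, ← Complex.exp_add]
    ring_nf
  obtain ⟨D, hD⟩ := hf.log_one_add fun θ => by
    rw [hfv]
    have h := hδexp (x := v θ - p θ) (by simpa using hvp θ)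
    rw [dist_zero_right] at h
    exact h.le
  refine ⟨_, _, hp.add hD, fun θ => ?_⟩
  simp only [hfv, add_sub_cancel]
  rw [Complex.exp_add, Complex.exp_log (Complex.exp_ne_zero _), ← Complex.exp_add, hav]
  ring_nf

theorem WienerBound.even_coeff {u : ℝ → ℂ} {C : ℝ} (hu : WienerBound circleChar u C)
    (heven : ∀ θ, u (-θ) = u θ) : ∃ d : ℤ → ℂ, (Summable fun k => ‖d k‖) ∧
      (∀ k, d (-k) = d k) ∧ ∀ θ, HasSum (fun k => d k * circleChar k θ) (u θ) := by
  obtain ⟨d, hd, -, hs⟩ := hu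
  have hdneg : Summable fun k => ‖d (-k)‖ := (Equiv.neg ℤ).summable_iff.2 hd
  refine ⟨fun k => (d k + d (-k)) / 2, ?_, fun k => by simp [add_comm], fun θ => ?_⟩
  · refine (hd.add hdneg).of_nonneg_of_le (fun _ => norm_nonneg _) fun k => ?_
    rw [norm_div, Complex.norm_two]
    linarith [norm_add_le (d k) (d (-k)), norm_nonneg (d k + d (-k))]
  · have h1 : HasSum (fun k => d (-k) * circleChar k θ) (u θ) := by
      rw [← heven θ, ← (Equiv.neg ℤ).hasSum_iff]
      refine (hs (-θ)).congr_fun fun k => ?_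
      simp [circleChar_neg]
    have h2 := ((hs θ).add h1).div_const 2
    rw [add_self_div_two] at h2
    refine h2.congr_fun fun k => ?_
    ring

theorem periodic_of_hasSum_circleChar {f : ℝ → ℂ} {c : ℤ → ℂ}
    (hf : ∀ θ, HasSum (fun k => c k * circleChar k θ) (f θ)) :
    Function.Periodic f (2 * Real.pi) := by
  intro θ
  refine (hf (θ + 2 * Real.pi)).unique ((hf θ).congr_fun fun k => ?_)
  congr 1
  rw [circleChar, circleChar, Complex.exp_eq_exp_iff_exists_int]
  exact ⟨k, by push_cast; ring⟩

theorem even_of_hasSum_circleChar {f : ℝ → ℂ} {c : ℤ → ℂ}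
    (hf : ∀ θ, HasSum (fun k => c k * circleChar k θ) (f θ)) (hc : ∀ k, c k = c (-k)) (θ : ℝ) :
    f (-θ) = f θ := by
  refine ((Equiv.neg ℤ).hasSum_iff.2 (hf (-θ))).unique ((hf θ).congr_fun fun k => ?_)
  simp [circleChar_neg, ← hc]

/-- A Fourier series with even coefficients splits into its mean and the analytic part evaluated
at `exp (iθ)` and at `exp (-iθ)`. -/
theorem hasSum_even_split {d : ℤ → ℂ} (heven : ∀ k, d (-k) = d k) {θ : ℝ} {s p m : ℂ}
    (hs : HasSum (fun k => d k * circleChar k θ) s)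
    (hp : HasSum (fun k : ℕ => (if k = 0 then 0 else d k) * Complex.exp (Complex.I * θ) ^ k) p)
    (hm : HasSum (fun k : ℕ => (if k = 0 then 0 else d k) * Complex.exp (-(Complex.I * θ)) ^ k) m) :
    s = m + d 0 + p := by
  have h1 := hs.nat_add_neg
  have h2 := (hp.add hm).add (hasSum_ite_eq 0 (2 * d 0))
  have h3 := h1.unique (h2.congr_fun fun k => ?_)
  · rw [isCharFamily_circleChar.zero] at h3
    linear_combination h3
  · have hneg : circleChar (-(k : ℤ)) θ = Complex.exp (-(Complex.I * θ)) ^ k := by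
      rw [← circleChar_neg, circleChar_natCast]
      push_cast
      rw [mul_neg]
    rw [heven, circleChar_natCast, hneg]
    split_ifs with hk
    · subst hk
      simp
      ring
    · ring

/-- Let `a` be a nonvanishing even function on the unit circle with absolutely summable
Fourier coefficients `c : ℤ → ℂ` (so `a(e^{iθ}) = Σ_{k∈ℤ} c_k e^{ikθ}`).  Then there exist
`G ∈ ℂ` and an absolutely summable sequence `(γ_k)_{k≥0}` such that `a₊(z) = Σ γ_k z^k`
satisfies `a₊(0) = 1`, `a₊(z) ≠ 0` for `|z| ≤ 1`, and
`a(e^{iθ}) = a₊(e^{−iθ}) · G · a₊(e^{iθ})` for all `θ`; moreover `G = exp([ℓ]_0)` for any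
continuous `2π`-periodic logarithm `ℓ` of `a`. -/
theorem stmt4 (c : ℤ → ℂ) (hc : Summable fun k => ‖c k‖)
    (a : ℝ → ℂ)
    (ha : ∀ θ : ℝ, a θ = ∑' k : ℤ, c k * Complex.exp (Complex.I * k * θ))
    (heven : ∀ k : ℤ, c k = c (-k))
    (hnz : ∀ θ : ℝ, a θ ≠ 0) :
    ∃ (G : ℂ) (γ : ℕ → ℂ), Summable (fun k => ‖γ k‖) ∧
      γ 0 = 1 ∧
      (∀ z : ℂ, ‖z‖ ≤ 1 → (∑' k : ℕ, γ k * z ^ k) ≠ 0) ∧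
      (∀ θ : ℝ, a θ =
        (∑' k : ℕ, γ k * Complex.exp (-(Complex.I * θ)) ^ k) * G *
          (∑' k : ℕ, γ k * Complex.exp (Complex.I * θ) ^ k)) ∧
      (∀ ℓ : ℝ → ℂ, Continuous ℓ → Function.Periodic ℓ (2 * Real.pi) →
        (∀ θ : ℝ, a θ = Complex.exp (ℓ θ)) →
        G = Complex.exp (((1 / (2 * Real.pi) : ℝ) : ℂ) *
          ∫ θ in (0:ℝ)..(2 * Real.pi), ℓ θ)) := by
  have hs : ∀ θ, HasSum (fun k => c k * circleChar k θ) (a θ) := fun θ => by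
    rw [ha θ]
    exact (isCharFamily_circleChar.summable hc id θ).hasSum
  obtain ⟨u, D, hu, hau⟩ := WienerBound.exists_log ⟨c, hc, le_rfl, hs⟩ hnz
    (even_of_hasSum_circleChar hs heven) (periodic_of_hasSum_circleChar hs)
  obtain ⟨d, hd, hdeven, hds⟩ := hu.even_coeff
    (log_even hu.continuous hau (even_of_hasSum_circleChar hs heven))
  set q : ℕ → ℂ := fun k => if k = 0 then 0 else d k with hq
  have hqsum : Summable fun k => ‖q k‖ := by
    refine (hd.comp_injective Nat.cast_injective).of_nonneg_of_le (fun _ => norm_nonneg _)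
      fun k => ?_
    simp only [hq, Function.comp_apply]
    split_ifs <;> simp
  have hqs := fun z => (isCharFamily_discChar.summable hqsum id z).hasSum
  obtain ⟨γ, hγ, -, hγs⟩ := WienerBound.exp isCharFamily_discChar ⟨q, hqsum, le_rfl, hqs⟩
  have hγval := fun (z : ℂ) (hz : ‖z‖ ≤ 1) => (hγs ⟨z, hz⟩).tsum_eq
  simp only [discChar, id] at hγval
  refine ⟨Complex.exp (d 0), γ, hγ, ?_, fun z hz => ?_, fun θ => ?_, fun ℓ hℓ _ haℓ => ?_⟩
  · have h := hγval 0 (by simp)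
    rw [tsum_eq_single 0 fun k hk => by simp [hk], tsum_eq_single 0 fun k hk => by simp [hk]] at h
    simpa [hq] using h
  · rw [hγval z hz]
    exact Complex.exp_ne_zero _
  · have hp : ‖Complex.exp (Complex.I * θ)‖ ≤ 1 := by simp [Complex.norm_exp]
    have hm : ‖Complex.exp (-(Complex.I * θ))‖ ≤ 1 := by simp [Complex.norm_exp]
    rw [hγval _ hp, hγval _ hm, ← Complex.exp_add, ← Complex.exp_add, hau]
    exact congrArg _ (hasSum_even_split hdeven (hds θ) (hqs ⟨_, hp⟩) (hqs ⟨_, hm⟩))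
  · obtain ⟨n, hn⟩ := eq_add_of_exp_eq_exp hℓ hu.continuous fun θ => by rw [← haℓ, hau]
    have hpi : (Real.pi : ℂ) ≠ 0 := by exact_mod_cast Real.pi_ne_zero
    simp only [hn]
    rw [intervalIntegral.integral_add (hu.continuous.intervalIntegrable _ _)
      intervalIntegrable_const, integral_eq_of_hasSum_circleChar hd hds,
      intervalIntegral.integral_const, Complex.exp_eq_exp_iff_exists_int]
    refine ⟨-n, ?_⟩
    simp only [sub_zero, Complex.real_smul]
    push_cast
    field_simp
    ring

end
end
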